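/- arXiv:2008.10371 — 3 statements merged into one kernel-verified Lean document; each statement's English description precedes it below -/
import Mathlib

section
/- The first homology group H₁(B₂(S₄)) of the unordered 2-point configuration space of the star graph with four edges is free abelian of rank 3, freely generated by the star classes α_{1jk} for 2 ≤ j < k ≤ 4. -/
/-!
A combinatorial model of the Świątkowski chain complex of a finite graph
(finite CW-complex of dimension ≤ 1), computing the homology of its unordered
configuration spaces (An–Drummond-Cole–Knudsen).

A graph is given by a vertex type `V`, an edge type `E` and an endpoint map
`ends : E → V × V` (self-loops and multiple edges are allowed).  A half-edge is
a pair `(e, b) : E × Bool`, whose vertex is the corresponding endpoint of `e`.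

We work with the ℤ-basis of the Świątkowski complex consisting of a monomial
`m : E →₀ ℕ` in the edges together with a choice, for each vertex `v`, of a
local generator from `S(v) = ℤ⟨∅, v, h ∈ H(v)⟩`: a half-edge at `v`
(`Sum.inl`), the vertex itself (`Sum.inr true`), or `∅` (`Sum.inr false`).
The differential is the ℤ[E]-linear derivation with `∂h = e(h) - v(h)`,
with Koszul signs determined by a fixed enumeration of the vertices.
`degB` is the homological degree (number of half-edge factors) and `wtB` is the
weight (number of particles).  `hasDW i k` is the subgroup of chains of pure
degree `i` and weight `k`; `cyc i k` the corresponding cycles, `bdry i k` the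
boundaries of degree/weight `(i+1, k)` chains, and `Hgr i k` their quotient,
which is `H_i(B_k Γ)`.  `stab e` is edge stabilization (multiplication by `e`).
-/

namespace Swiatkowski

variable {V E : Type} [Fintype V] [Fintype E] [DecidableEq V] [DecidableEq E]

/-- The vertex of a half-edge. -/
def vtx (ends : E → V × V) (h : E × Bool) : V :=
  cond h.2 (ends h.1).2 (ends h.1).1

/-- The local generators at a vertex `v`: a half-edge at `v`, or the vertex
generator (`true`), or `∅` (`false`). -/
abbrev VGen (ends : E → V × V) (v : V) : Type :=
  {h : E × Bool // vtx ends h = v} ⊕ Bool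

/-- A choice of local generator at every vertex. -/
abbrev States (ends : E → V × V) : Type := ∀ v : V, VGen ends v

/-- The ℤ-basis of the Świątkowski complex: an edge monomial together with a
state. -/
abbrev Bas (ends : E → V × V) : Type := (E →₀ ℕ) × States ends

/-- The underlying ℤ-module of the Świątkowski complex. -/
abbrev SC (ends : E → V × V) : Type := Bas ends →₀ ℤ

variable (ends : E → V × V)

/-- An enumeration of the vertices, used for Koszul signs. -/
noncomputable def idx : V → ℕ := fun v => ((Fintype.equivFin V) v : ℕ)

/-- The Koszul sign of the half-edge slot at `v` inside the state `f`. -/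
noncomputable def sgn (f : States ends) (v : V) : ℤ :=
  (-1) ^ (Finset.univ.filter fun w => idx w < idx v ∧ (f w).isLeft = true).card

/-- Homological degree of a basis element: its number of half-edge factors. -/
def degB (b : Bas ends) : ℕ :=
  (Finset.univ.filter fun v => (b.2 v).isLeft = true).card

/-- Weight (particle number) of a basis element. -/
def wtB (b : Bas ends) : ℕ :=
  (b.1.sum fun _ n => n) + ∑ v : V, Sum.elim (fun _ => 1) (fun t => cond t 1 0) (b.2 v)

/-- Value of the differential on a basis element: the signed sum over the
half-edge slots `h` of the substitutions `h ↦ e(h)` and `h ↦ v(h)`. -/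
noncomputable def Db (b : Bas ends) : SC ends :=
  ∑ v : V,
    (match b.2 v with
      | Sum.inl h =>
          sgn ends b.2 v •
            (Finsupp.single (b.1 + Finsupp.single h.1.1 1,
                Function.update b.2 v (Sum.inr false)) (1 : ℤ)
              - Finsupp.single (b.1, Function.update b.2 v (Sum.inr true)) (1 : ℤ))
      | Sum.inr _ => 0)

/-- The differential of the Świątkowski complex. -/
noncomputable def D : SC ends →ₗ[ℤ] SC ends :=
  Finsupp.linearCombination ℤ (Db ends)

/-- The subgroup of chains of pure homological degree `i` and weight `k`. -/
noncomputable def hasDW (i k : ℕ) : Submodule ℤ (SC ends) where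
  carrier := {x | ∀ b ∈ x.support, degB ends b = i ∧ wtB ends b = k}
  add_mem' := by
    intro x y hx hy b hb
    rcases Finset.mem_union.mp (Finsupp.support_add hb) with h | h
    exacts [hx b h, hy b h]
  zero_mem' := by simp
  smul_mem' := by
    intro c x hx b hb
    exact hx b (Finsupp.support_smul hb)

/-- Cycles of degree `i` and weight `k`. -/
noncomputable def cyc (i k : ℕ) : Submodule ℤ (SC ends) := LinearMap.ker (D ends) ⊓ hasDW ends i k

/-- Boundaries of degree `i` and weight `k` chains. -/
noncomputable def bdry (i k : ℕ) : Submodule ℤ (SC ends) := Submodule.map (D ends) (hasDW ends (i + 1) k)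

/-- The homology `H_i(B_k Γ)` of the weight-`k` Świątkowski complex. -/
noncomputable def Hgr (i k : ℕ) :=
  cyc ends i k ⧸ Submodule.comap (cyc ends i k).subtype (bdry ends i k)

noncomputable instance (i k : ℕ) : AddCommGroup (Hgr ends i k) :=
  inferInstanceAs (AddCommGroup
    (cyc ends i k ⧸ Submodule.comap (cyc ends i k).subtype (bdry ends i k)))

/-- Edge stabilization: multiplication by the edge `e`. -/
noncomputable def stab (e : E) : SC ends →ₗ[ℤ] SC ends :=
  Finsupp.lmapDomain ℤ ℤ fun b => (b.1 + Finsupp.single e 1, b.2)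

end Swiatkowski

namespace Star4

open Swiatkowski

/-- The star graph `S₄`: a central vertex `none` joined to four leaves
`some i` by the edges `i : Fin 4`. -/
def ends : Fin 4 → Option (Fin 4) × Option (Fin 4) := fun e => (none, some e)

/-- The state placing the half-edge of edge `j` at the central vertex and `∅`
everywhere else. -/
def stateH (j : Fin 4) : States ends := fun v =>
  match v with
  | none => Sum.inl ⟨(j, false), rfl⟩
  | some _ => Sum.inr false

/-- The degree-one basis chain `h_j` (half-edge of edge `j` at the center). -/
noncomputable def sH (j : Fin 4) : SC ends :=
  Finsupp.single ((0 : Fin 4 →₀ ℕ), stateH j) (1 : ℤ)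

/-- The star cycle `α_{1jk} = e_k(h₁ − h_j) + e_j(h_k − h₁) + e₁(h_j − h_k)`
(indices shifted to start at `0`). -/
noncomputable def starCyc (j k : Fin 4) : SC ends :=
  stab ends k (sH 0 - sH j) + stab ends j (sH k - sH 0) + stab ends 0 (sH j - sH k)


/-! ### Basis elements -/

/-- The empty state. -/
def z : States ends := fun _ => Sum.inr false

/-- The half-edge `j` at the center. -/
def hc (j : Fin 4) : {h : Fin 4 × Bool // vtx ends h = none} := ⟨(j, false), rfl⟩

/-- The half-edge at the leaf `i`. -/
def hl (i : Fin 4) : {h : Fin 4 × Bool // vtx ends h = some i} := ⟨(i, true), rfl⟩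

lemma hc_surj (h : {h : Fin 4 × Bool // vtx ends h = none}) : ∃ j, h = hc j := by
  obtain ⟨⟨j, b⟩, hb⟩ := h
  cases b
  · exact ⟨j, rfl⟩
  · simp [vtx, ends] at hb

lemma hl_surj (i : Fin 4) (h : {h : Fin 4 × Bool // vtx ends h = some i}) : h = hl i := by
  obtain ⟨⟨j, b⟩, hb⟩ := h
  cases b
  · simp [vtx, ends] at hb
  · simp [vtx, ends] at hb
    subst hb
    rfl

/-- One-vertex occupation state. -/
def o1 (v : Option (Fin 4)) (g : VGen ends v) : States ends := Function.update z v g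

/-- Two-vertex occupation state. -/
def o2 (w v : Option (Fin 4)) (g' : VGen ends w) (g : VGen ends v) : States ends :=
  Function.update (Function.update z w g') v g

lemma sgn_eq_one (f : States ends) (v : Option (Fin 4))
    (h : ∀ w, w ≠ v → (f w).isLeft = false) : sgn ends f v = 1 := by
  unfold sgn
  rw [Finset.filter_eq_empty_iff.mpr]
  · simp
  · rintro w - ⟨h1, h2⟩
    by_cases hw : w = v
    · subst hw; omega
    · rw [h w hw] at h2; simp at h2

lemma Db_one (m : Fin 4 →₀ ℕ) (f : States ends) (v : Option (Fin 4))
    (hh : {h : Fin 4 × Bool // vtx ends h = v})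
    (hv : f v = Sum.inl hh)
    (h : ∀ w, w ≠ v → (f w).isLeft = false) :
    Db ends (m, f) = Finsupp.single (m + Finsupp.single hh.1.1 1,
                Function.update f v (Sum.inr false)) (1 : ℤ)
              - Finsupp.single (m, Function.update f v (Sum.inr true)) (1 : ℤ) := by
  unfold Db
  rw [Finset.sum_eq_single v]
  · simp only [hv, sgn_eq_one f v h, one_smul]
  · intro w _ hw
    have := h w hw
    rcases hf : f w with a | a
    · rw [hf] at this; simp at this
    · simp only [hf]
  · simp

lemma idx_inj {v w : Option (Fin 4)} (h : idx v = idx w) : v = w := by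
  unfold idx at h
  exact (Fintype.equivFin _).injective (Fin.ext h)

lemma sgn_two (f : States ends) (v w : Option (Fin 4)) 
    (hw : (f w).isLeft = true)
    (h : ∀ u, u ≠ v → u ≠ w → (f u).isLeft = false) :
    sgn ends f v = if idx w < idx v then -1 else 1 := by
  unfold sgn
  split_ifs with hlt
  · rw [show (Finset.univ.filter fun u => idx u < idx v ∧ (f u).isLeft = true) = {w} from ?_]
    · simp
    · ext u
      simp only [Finset.mem_filter, Finset.mem_univ, true_and, Finset.mem_singleton]
      constructor
      · rintro ⟨h1, h2⟩
        by_contra hne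
        by_cases huv : u = v
        · subst huv; omega
        · rw [h u huv hne] at h2; simp at h2
      · rintro rfl
        exact ⟨hlt, hw⟩
  · rw [Finset.filter_eq_empty_iff.mpr]
    · simp
    · rintro u - ⟨h1, h2⟩
      by_cases huv : u = v
      · subst huv; omega
      · by_cases huw : u = w
        · subst huw; omega
        · rw [h u huv huw] at h2; simp at h2

lemma Db_two (m : Fin 4 →₀ ℕ) (f : States ends) (v w : Option (Fin 4)) (hvw : v ≠ w)
    (hh : {h : Fin 4 × Bool // vtx ends h = v}) (hh' : {h : Fin 4 × Bool // vtx ends h = w})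
    (hv : f v = Sum.inl hh) (hw : f w = Sum.inl hh')
    (h : ∀ u, u ≠ v → u ≠ w → (f u).isLeft = false) :
    ∃ ε : ℤ, ε * ε = 1 ∧ Db ends (m, f) =
      ε • ((Finsupp.single (m + Finsupp.single hh.1.1 1,
                Function.update f v (Sum.inr false)) (1 : ℤ)
              - Finsupp.single (m, Function.update f v (Sum.inr true)) (1 : ℤ))
        - (Finsupp.single (m + Finsupp.single hh'.1.1 1,
                Function.update f w (Sum.inr false)) (1 : ℤ)
              - Finsupp.single (m, Function.update f w (Sum.inr true)) (1 : ℤ))) := by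
  have hs1 := sgn_two f v w (by rw [hw]; rfl) h
  have hs2 := sgn_two f w v (by rw [hv]; rfl) (fun u a b => h u b a)
  have hne : idx v ≠ idx w := fun e => hvw (idx_inj e)
  refine ⟨sgn ends f v, ?_, ?_⟩
  · rw [hs1]; split_ifs <;> rfl
  · have hs : sgn ends f w = - sgn ends f v := by
      rw [hs1, hs2]; split_ifs <;> first | rfl | omega
    unfold Db
    rw [Finset.sum_eq_add v w hvw]
    · simp only [hv, hw, hs]
      module
    · rintro u - ⟨hu1, hu2⟩
      have := h u hu1 hu2
      rcases hf : f u with a | a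
      · rw [hf] at this; simp at this
      · simp only [hf]
    · simp
    · simp

/-- `e_i h_j`. -/
noncomputable def ce (i j : Fin 4) : SC ends :=
  Finsupp.single (Finsupp.single i 1, o1 none (Sum.inl (hc j))) 1
/-- `v_i h_j`. -/
noncomputable def cl (i j : Fin 4) : SC ends :=
  Finsupp.single (0, o2 (some i) none (Sum.inr true) (Sum.inl (hc j))) 1
/-- `e_i k_j`. -/
noncomputable def le (i j : Fin 4) : SC ends :=
  Finsupp.single (Finsupp.single i 1, o1 (some j) (Sum.inl (hl j))) 1
/-- `v k_j`. -/
noncomputable def lv (j : Fin 4) : SC ends :=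
  Finsupp.single (0, o2 none (some j) (Sum.inr true) (Sum.inl (hl j))) 1
/-- `v_i k_j`. -/
noncomputable def ll (i j : Fin 4) : SC ends :=
  Finsupp.single (0, o2 (some i) (some j) (Sum.inr true) (Sum.inl (hl j))) 1

/-- Two particles on edges. -/
noncomputable def EE (i j : Fin 4) : Bas ends := (Finsupp.single i 1 + Finsupp.single j 1, z)
/-- A particle on an edge and one at a vertex. -/
noncomputable def EV (i : Fin 4) (w : Option (Fin 4)) : Bas ends :=
  (Finsupp.single i 1, o1 w (Sum.inr true))
/-- Two particles at vertices. -/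
noncomputable def VV (w v : Option (Fin 4)) : Bas ends :=
  (0, o2 w v (Sum.inr true) (Sum.inr true))

lemma D_single (b : Bas ends) : D ends (Finsupp.single b 1) = Db ends b := by
  simp [D]

lemma D_o1 (i : Fin 4) (v : Option (Fin 4)) (hh : {h : Fin 4 × Bool // vtx ends h = v}) :
    D ends (Finsupp.single (Finsupp.single i 1, o1 v (Sum.inl hh)) 1)
      = Finsupp.single (EE i hh.1.1) 1 - Finsupp.single (EV i v) 1 := by
  rw [D_single, Db_one _ _ v hh]
  · simp only [o1, Function.update_idem, EE, EV]
    congr 4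
    exact Function.update_eq_self v z
  · simp [o1]
  · intro w hw
    simp [o1, hw, z]

lemma D_o2 (w v : Option (Fin 4)) (hvw : w ≠ v) (hh : {h : Fin 4 × Bool // vtx ends h = v}) :
    D ends (Finsupp.single (0, o2 w v (Sum.inr true) (Sum.inl hh)) 1)
      = Finsupp.single (EV hh.1.1 w) 1 - Finsupp.single (VV w v) 1 := by
  rw [D_single, Db_one _ _ v hh]
  · simp only [o2, Function.update_idem, EV, VV, zero_add, o1]
    rw [Function.update_comm hvw]
    rw [show Function.update z v (Sum.inr false) = z from Function.update_eq_self v z]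
  · simp [o2]
  · intro u hu
    by_cases h : u = w
    · subst h; simp [o2, hu]
    · simp [o2, hu, h, z]

lemma D_22 (w v : Option (Fin 4)) (hvw : v ≠ w)
    (hh : {h : Fin 4 × Bool // vtx ends h = v}) (hh' : {h : Fin 4 × Bool // vtx ends h = w}) :
    ∃ ε : ℤ, ε * ε = 1 ∧
     D ends (Finsupp.single (0, o2 w v (Sum.inl hh') (Sum.inl hh)) 1) =
      ε • ((Finsupp.single (Finsupp.single hh.1.1 1, o1 w (Sum.inl hh')) (1 : ℤ)
              - Finsupp.single (0, o2 v w (Sum.inr true) (Sum.inl hh')) (1 : ℤ))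
        - (Finsupp.single (Finsupp.single hh'.1.1 1, o1 v (Sum.inl hh)) (1 : ℤ)
              - Finsupp.single (0, o2 w v (Sum.inr true) (Sum.inl hh)) (1 : ℤ))) := by
  obtain ⟨ε, h1, h2⟩ := Db_two 0 (o2 w v (Sum.inl hh') (Sum.inl hh)) v w hvw hh hh'
    (by simp [o2]) (by simp [o2, hvw.symm]) (by intro u a b; simp [o2, a, b, z])
  refine ⟨ε, h1, ?_⟩
  rw [D_single, h2]
  have zz : ∀ u : Option (Fin 4), Function.update z u (Sum.inr false) = z :=
    fun u => Function.update_eq_self u z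
  congr 2
  · congr 2
    · simp only [zero_add, o2, Function.update_idem, o1]
      rw [Function.update_comm hvw.symm, zz]
    · simp only [o2, Function.update_idem]
      rw [Function.update_comm hvw.symm]
  · congr 2
    · simp only [zero_add, o2, o1]
      rw [Function.update_comm hvw.symm, Function.update_idem, Function.update_comm hvw, zz]
    · simp only [o2]
      rw [Function.update_comm hvw.symm, Function.update_idem, Function.update_comm hvw]

lemma stateH_eq (j : Fin 4) : stateH j = o1 none (Sum.inl (hc j)) := by
  funext v
  cases v <;> rfl

lemma starCyc_eq (j k : Fin 4) : starCyc j k =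
    (ce k 0 - ce k j) + (ce j k - ce j 0) + (ce 0 j - ce 0 k) := by
  simp [starCyc, stab, sH, ce, stateH_eq, Finsupp.mapDomain_sub, Finsupp.mapDomain_single]

lemma single_mem (b : Bas ends) (i k : ℕ) (h : degB ends b = i ∧ wtB ends b = k) :
    Finsupp.single b 1 ∈ hasDW ends i k := by
  intro b' hb'
  have := Finsupp.support_single_subset hb'
  rw [Finset.mem_singleton] at this
  subst this
  exact h

lemma ce_mem (i j : Fin 4) : ce i j ∈ hasDW ends 1 2 := by
  apply single_mem
  constructor
  · revert j
    show ∀ j, (Finset.univ.filter fun v => ((o1 none (Sum.inl (hc j))) v).isLeft = true).card = 1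
    decide
  · have : ∀ j : Fin 4, ∑ v, Sum.elim (fun _ => 1) (fun t => cond t 1 0)
      ((o1 none (Sum.inl (hc j))) v) = 1 := by decide
    simp [wtB, this]

lemma starCyc_mem (j k : Fin 4) : starCyc j k ∈ cyc ends 1 2 := by
  constructor
  · show D ends (starCyc j k) = 0
    rw [starCyc_eq]
    have hD : ∀ i j, D ends (ce i j) = Finsupp.single (EE i j) 1 - Finsupp.single (EV i none) 1 :=
      fun i j => D_o1 i none (hc j)
    have hs : ∀ i j, EE i j = EE j i := fun i j => by simp [EE, add_comm]
    simp only [map_add, map_sub, hD]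
    rw [hs k 0, hs k j, hs j 0]
    abel
  · rw [starCyc_eq]
    have := ce_mem
    exact add_mem (add_mem (sub_mem (this _ _) (this _ _)) (sub_mem (this _ _) (this _ _)))
      (sub_mem (this _ _) (this _ _))

/-! ### Uniqueness: detecting functionals -/

/-- The detecting functional on basis elements. -/
def Fb (j k : Fin 4) (b : Bas ends) : ℤ :=
  if b.2 none = Sum.inl (hc k) ∧
    b.1 j + (if b.2 (some j) = Sum.inr true then 1 else 0) = 1 then 1 else 0

/-- The detecting functional. -/
noncomputable def F (j k : Fin 4) : SC ends →ₗ[ℤ] ℤ := Finsupp.linearCombination ℤ (Fb j k)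

lemma F_single (j k : Fin 4) (b : Bas ends) : F j k (Finsupp.single b 1) = Fb j k b := by
  simp [F]

lemma F_D (j k : Fin 4) (x : SC ends) : F j k (D ends x) = 0 := by
  suffices (F j k).comp (D ends) = 0 from LinearMap.congr_fun this x
  apply Finsupp.lhom_ext'
  intro b
  ext
  show F j k (D ends (Finsupp.single b 1)) = 0
  rw [D_single]
  unfold Db
  rw [map_sum]
  apply Finset.sum_eq_zero
  intro v _
  obtain ⟨m, f⟩ := b
  rcases hf : f v with h | h
  · simp only [hf, map_smul, map_sub, F_single]
    suffices Fb j k (m + Finsupp.single h.1.1 1, Function.update f v (Sum.inr false)) =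
      Fb j k (m, Function.update f v (Sum.inr true)) by rw [this]; simp
    cases v with
    | none => simp [Fb]
    | some i =>
      rw [hl_surj i h]
      by_cases hij : j = i
      · subst hij; simp [Fb, hl]
      · simp [Fb, hl, hij]
  · simp only [hf, map_zero]

lemma F_ce (j k a b : Fin 4) : F j k (ce a b) = if b = k ∧ a = j then 1 else 0 := by
  rw [ce, F_single]
  have : hc b = hc k ↔ b = k := by
    constructor
    · intro h
      exact congrArg (fun x => x.1.1) h
    · rintro rfl; rfl
  simp [Fb, o1, z, this, Finsupp.single_apply]

/-! ### Existence -/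

/-- Boundaries plus the span of the star cycles. -/
noncomputable def N : Submodule ℤ (SC ends) :=
  bdry ends 1 2 ⊔ Submodule.span ℤ {starCyc 1 2, starCyc 1 3, starCyc 2 3}

/-- The quotient map. -/
noncomputable def q : SC ends →ₗ[ℤ] (SC ends ⧸ N) := N.mkQ

lemma q_zero {x : SC ends} (h : x ∈ N) : q x = 0 := by
  simpa [q] using h

lemma q_star_ne (j k : Fin 4) (h : starCyc j k ∈ ({starCyc 1 2, starCyc 1 3, starCyc 2 3} : Set (SC ends))) :
    q (ce k 0) - q (ce k j) + (q (ce j k) - q (ce j 0)) + (q (ce 0 j) - q (ce 0 k)) = 0 := by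
  have := q_zero (Submodule.mem_sup_right (Submodule.subset_span h) : starCyc j k ∈ N)
  rw [starCyc_eq] at this
  simpa using this

lemma q_star (j k : Fin 4) :
    q (ce k 0) - q (ce k j) + (q (ce j k) - q (ce j 0)) + (q (ce 0 j) - q (ce 0 k)) = 0 := by
  have h1 := q_star_ne 1 2 (by simp)
  have h2 := q_star_ne 1 3 (by simp)
  have h3 := q_star_ne 2 3 (by simp)
  fin_cases j <;> fin_cases k <;> dsimp only [Fin.zero_eta, Fin.mk_one, Fin.reduceFinMk] <;>
    first
    | abel1
    | exact h1
    | exact h2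
    | exact h3
    | (rw [← neg_eq_zero, ← h1]; abel1)
    | (rw [← neg_eq_zero, ← h2]; abel1)
    | (rw [← neg_eq_zero, ← h3]; abel1)

lemma q_face (w v : Option (Fin 4)) (hvw : v ≠ w)
    (hh : {h : Fin 4 × Bool // vtx ends h = v}) (hh' : {h : Fin 4 × Bool // vtx ends h = w})
    (hm : degB ends (0, o2 w v (Sum.inl hh') (Sum.inl hh)) = 2 ∧
      wtB ends (0, o2 w v (Sum.inl hh') (Sum.inl hh)) = 2) :
    q (Finsupp.single (Finsupp.single hh.1.1 1, o1 w (Sum.inl hh')) (1 : ℤ))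
      - q (Finsupp.single (0, o2 v w (Sum.inr true) (Sum.inl hh')) (1 : ℤ))
        - (q (Finsupp.single (Finsupp.single hh'.1.1 1, o1 v (Sum.inl hh)) (1 : ℤ))
              - q (Finsupp.single (0, o2 w v (Sum.inr true) (Sum.inl hh)) (1 : ℤ))) = 0 := by
  obtain ⟨ε, h1, h2⟩ := D_22 w v hvw hh hh'
  have h3 : D ends (Finsupp.single (0, o2 w v (Sum.inl hh') (Sum.inl hh)) 1) ∈ N :=
    Submodule.mem_sup_left (Submodule.mem_map_of_mem (single_mem _ _ _ hm))
  rw [h2] at h3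
  have h4 := q_zero (N.smul_mem ε h3)
  rw [smul_smul, h1, one_smul] at h4
  simpa using h4

lemma q_faceCL (j i : Fin 4) :
    q (ce i j) - q (cl i j) - (q (le j i) - q (lv i)) = 0 := by
  refine q_face none (some i) (by simp) (hl i) (hc j) ⟨?_, ?_⟩
  · revert i j
    show ∀ j i, (Finset.univ.filter fun v =>
      ((o2 none (some i) (Sum.inl (hc j)) (Sum.inl (hl i))) v).isLeft = true).card = 2
    decide
  · have : ∀ j i : Fin 4, ∑ v, Sum.elim (fun _ => 1) (fun t => cond t 1 0)
      ((o2 none (some i) (Sum.inl (hc j)) (Sum.inl (hl i))) v) = 2 := by decide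
    simp [wtB, this]

lemma q_faceLL (j i : Fin 4) (hij : i ≠ j) :
    q (le i j) - q (ll i j) - (q (le j i) - q (ll j i)) = 0 := by
  refine q_face (some j) (some i) (by simpa using hij) (hl i) (hl j) ⟨?_, ?_⟩
  · revert i j
    show ∀ j i, i ≠ j → (Finset.univ.filter fun v =>
      ((o2 (some j) (some i) (Sum.inl (hl j)) (Sum.inl (hl i))) v).isLeft = true).card = 2
    decide
  · have : ∀ j i : Fin 4, i ≠ j → ∑ v, Sum.elim (fun _ => 1) (fun t => cond t 1 0)
      ((o2 (some j) (some i) (Sum.inl (hl j)) (Sum.inl (hl i))) v) = 2 := by decide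
    simp [wtB, this j i hij]

/-- Positions of a particle: a vertex or an edge. -/
abbrev Site : Type := Option (Fin 4) ⊕ Fin 4

/-- Move a particle to edge `0`, the other particle being on the edge `t`. -/
noncomputable def pE (t : Fin 4) : Site → SC ends
  | Sum.inl none => - ce t 0
  | Sum.inl (some i) => ce t i - ce t 0 - le t i
  | Sum.inr i => ce t i - ce t 0

/-- Move a particle to edge `0`, the other particle being at the leaf `t`. -/
noncomputable def pL (t : Fin 4) : Site → SC ends
  | Sum.inl none => - cl t 0
  | Sum.inl (some i) => cl t i - cl t 0 - ll t i
  | Sum.inr i => cl t i - cl t 0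

/-- Move first the particle at `s`, then the particle at `t`, to edge `0`. -/
noncomputable def P (s : Site) : Site → SC ends
  | Sum.inl none => 0
  | Sum.inl (some t) => pL t s + pE 0 (Sum.inl (some t))
  | Sum.inr t => pE t s + pE 0 (Sum.inr t)

/-- Occupation numbers. -/
def occ (m : Fin 4 → ℕ) (f : States ends) : Site → ℕ
  | Sum.inl v => if f v = Sum.inr true then 1 else 0
  | Sum.inr i => m i

/-- The list of particle positions. -/
def dec (m : Fin 4 → ℕ) (f : States ends) : List Site :=
  ([Sum.inl none, Sum.inl (some 0), Sum.inl (some 1), Sum.inl (some 2), Sum.inl (some 3),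
    Sum.inr 0, Sum.inr 1, Sum.inr 2, Sum.inr 3] : List Site).flatMap
      fun s => List.replicate (occ m f s) s

/-- The path on a list of positions. -/
noncomputable def PL : List Site → SC ends
  | [s, t] => P s t
  | _ => 0

/-- The homotopy. -/
noncomputable def S : SC ends →ₗ[ℤ] SC ends :=
  Finsupp.linearCombination ℤ fun b => PL (dec b.1 b.2)

lemma S_single (m : Fin 4 →₀ ℕ) (f : States ends) :
    S (Finsupp.single (m, f) 1) = PL (dec m f) := by
  simp [S]

lemma q_symm_EE (i j : Fin 4) : q (P (Sum.inr i) (Sum.inr j)) = q (P (Sum.inr j) (Sum.inr i)) := by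
  have h := q_star i j
  simp only [P, pE, map_add, map_sub, map_neg]
  rw [← sub_eq_zero, ← neg_eq_zero, ← h]
  abel

lemma q_symm_LE (i j : Fin 4) :
    q (P (Sum.inl (some i)) (Sum.inr j)) = q (P (Sum.inr j) (Sum.inl (some i))) := by
  have h := q_star i j
  have h1 := q_faceCL j i
  have h2 := q_faceCL 0 i
  simp only [P, pE, pL, map_add, map_sub, map_neg]
  linear_combination (norm := module) (-1 : ℤ) • h + (1 : ℤ) • h1 - (1 : ℤ) • h2

lemma q_symm_LL (i j : Fin 4) (hij : i ≠ j) :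
    q (P (Sum.inl (some i)) (Sum.inl (some j))) = q (P (Sum.inl (some j)) (Sum.inl (some i))) := by
  have h := q_star i j
  have h1 := q_faceCL j i
  have h2 := q_faceCL 0 i
  have h3 := q_faceCL i j
  have h4 := q_faceCL 0 j
  have h5 := q_faceLL j i hij
  simp only [P, pE, pL, map_add, map_sub]
  linear_combination (norm := module) (-1 : ℤ) • h + (1 : ℤ) • h1 - (1 : ℤ) • h2
    - (1 : ℤ) • h3 + (1 : ℤ) • h4 - (1 : ℤ) • h5

lemma qS_EE (i j : Fin 4) :
    q (S (Finsupp.single (EE i j) 1)) = q (P (Sum.inr i) (Sum.inr j)) := by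
  rw [EE, S_single, Finsupp.coe_add, Finsupp.single_eq_pi_single, Finsupp.single_eq_pi_single]
  have : ∀ i j : Fin 4, dec (Pi.single i 1 + Pi.single j 1) z = [Sum.inr i, Sum.inr j] ∨
      dec (Pi.single i 1 + Pi.single j 1) z = [Sum.inr j, Sum.inr i] := by decide
  rcases this i j with h | h <;> rw [h]
  · rfl
  · exact q_symm_EE j i

lemma qS_EV0 (i : Fin 4) :
    q (S (Finsupp.single (EV i none) 1)) = q (P (Sum.inl none) (Sum.inr i)) := by
  rw [EV, S_single, Finsupp.single_eq_pi_single]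
  have : ∀ i : Fin 4, dec (Pi.single i 1) (o1 none (Sum.inr true)) =
    [Sum.inl none, Sum.inr i] := by decide
  rw [this]
  rfl

lemma qS_EV (i j : Fin 4) :
    q (S (Finsupp.single (EV i (some j)) 1)) = q (P (Sum.inl (some j)) (Sum.inr i)) := by
  rw [EV, S_single, Finsupp.single_eq_pi_single]
  have : ∀ i j : Fin 4, dec (Pi.single i 1) (o1 (some j) (Sum.inr true)) =
    [Sum.inl (some j), Sum.inr i] := by decide
  rw [this]
  rfl

lemma qS_VV0 (i : Fin 4) :
    q (S (Finsupp.single (VV none (some i)) 1)) = q (P (Sum.inl none) (Sum.inl (some i))) := by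
  rw [VV, S_single, Finsupp.coe_zero]
  have : ∀ i : Fin 4, dec 0 (o2 none (some i) (Sum.inr true) (Sum.inr true)) =
    [Sum.inl none, Sum.inl (some i)] := by decide
  rw [this]
  rfl

lemma qS_VV0' (i : Fin 4) :
    q (S (Finsupp.single (VV (some i) none) 1)) = q (P (Sum.inl none) (Sum.inl (some i))) := by
  rw [VV, S_single, Finsupp.coe_zero]
  have : ∀ i : Fin 4, dec 0 (o2 (some i) none (Sum.inr true) (Sum.inr true)) =
    [Sum.inl none, Sum.inl (some i)] := by decide
  rw [this]
  rfl

lemma qS_VV (i j : Fin 4) (hij : i ≠ j) :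
    q (S (Finsupp.single (VV (some i) (some j)) 1)) =
      q (P (Sum.inl (some i)) (Sum.inl (some j))) := by
  rw [VV, S_single, Finsupp.coe_zero]
  have : ∀ i j : Fin 4, i ≠ j →
      dec 0 (o2 (some i) (some j) (Sum.inr true) (Sum.inr true)) =
        [Sum.inl (some i), Sum.inl (some j)] ∨
      dec 0 (o2 (some i) (some j) (Sum.inr true) (Sum.inr true)) =
        [Sum.inl (some j), Sum.inl (some i)] := by decide
  rcases this i j hij with h | h <;> rw [h]
  · rfl
  · exact q_symm_LL j i hij.symm

lemma main_ce (i j : Fin 4) : q (ce i j) = q (S (D ends (ce i j))) := by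
  rw [ce, D_o1, map_sub, map_sub, qS_EE, qS_EV0, q_symm_EE, ← ce]
  simp only [P, pE, map_add, map_sub, map_neg, hc]
  abel

lemma main_cl (i j : Fin 4) : q (cl i j) = q (S (D ends (cl i j))) := by
  rw [cl, D_o2 _ _ (by simp), map_sub, map_sub, qS_EV, qS_VV0', q_symm_LE, ← cl]
  simp only [P, pE, pL, map_add, map_sub, map_neg, hc]
  abel

lemma main_le (i j : Fin 4) : q (le i j) = q (S (D ends (le i j))) := by
  rw [le, D_o1, map_sub, map_sub, qS_EE, qS_EV, q_symm_EE, ← le]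
  simp only [P, pE, pL, map_add, map_sub, hl]
  abel

lemma main_lv (j : Fin 4) : q (lv j) = q (S (D ends (lv j))) := by
  rw [lv, D_o2 _ _ (by simp), map_sub, map_sub, qS_EV0, qS_VV0, ← lv]
  have h2 := q_faceCL 0 j
  simp only [P, pE, pL, map_add, map_sub, map_neg, hl]
  linear_combination (norm := module) (1 : ℤ) • h2

lemma main_ll (i j : Fin 4) (hij : i ≠ j) : q (ll i j) = q (S (D ends (ll i j))) := by
  rw [ll, D_o2 _ _ (by simpa using hij), map_sub, map_sub, qS_EV, qS_VV _ _ hij,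
    q_symm_LL _ _ hij, q_symm_LE, ← ll]
  simp only [P, pE, pL, map_add, map_sub, hl]
  abel

lemma classify (b : Bas ends) (hd : degB ends b = 1) (hw : wtB ends b = 2) :
    q (Finsupp.single b 1) = q (S (D ends (Finsupp.single b 1))) := by
  obtain ⟨m, f⟩ := b
  obtain ⟨v, hv⟩ := Finset.card_eq_one.mp hd
  have hv' : ∀ u, (f u).isLeft = true ↔ u = v := by
    intro u
    have := Finset.ext_iff.mp hv u
    simpa using this
  obtain ⟨hh, hfv⟩ := Sum.isLeft_iff.mp ((hv' v).mpr rfl)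
  have hfu : ∀ u, u ≠ v → ∃ t, f u = Sum.inr t := by
    intro u hu
    rcases hf : f u with a | a
    · exact absurd ((hv' u).mp (by rw [hf]; rfl)) hu
    · exact ⟨a, rfl⟩
  unfold wtB at hw
  dsimp only at hw
  rw [← Finset.add_sum_erase _ _ (Finset.mem_univ v), hfv] at hw
  simp only [Sum.elim_inl] at hw
  have key : (∃ i, m = Finsupp.single i 1 ∧ f = o1 v (Sum.inl hh)) ∨
      (∃ w, w ≠ v ∧ m = 0 ∧ f = o2 w v (Sum.inr true) (Sum.inl hh)) := by
    by_cases hex : ∃ w, w ≠ v ∧ f w = Sum.inr true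
    · right
      obtain ⟨w, hwv, hfw⟩ := hex
      refine ⟨w, hwv, ?_⟩
      rw [← Finset.add_sum_erase _ _ (Finset.mem_erase.mpr ⟨hwv, Finset.mem_univ w⟩), hfw] at hw
      simp only [Sum.elim_inr, cond_true] at hw
      have h1 : (m.sum fun _ n => n) = 0 := by omega
      have h2 : ∑ x ∈ (Finset.univ.erase v).erase w,
        Sum.elim (fun _ => 1) (fun t => cond t 1 0) (f x) = 0 := by omega
      constructor
      · ext i
        by_contra hne
        have := Finset.sum_eq_zero_iff.mp h1 i (by simpa using hne)
        exact hne this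
      · funext u
        by_cases huv : u = v
        · subst huv; simp [o2, hfv]
        · by_cases huw : u = w
          · subst huw; simp [o2, huv, hfw]
          · obtain ⟨t, ht⟩ := hfu u huv
            have := Finset.sum_eq_zero_iff.mp h2 u (by simp [huv, huw])
            rw [ht] at this
            cases t
            · simp [o2, huv, huw, ht, z]
            · simp at this
    · left
      push Not at hex
      have hfu' : ∀ u, u ≠ v → f u = Sum.inr false := by
        intro u hu
        obtain ⟨t, ht⟩ := hfu u hu
        cases t
        · exact ht
        · exact absurd ht (hex u hu)
      rw [Finset.sum_eq_zero (s := Finset.univ.erase v)] at hw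
      · have h1 : (m.sum fun _ n => n) = 1 := by omega
        obtain ⟨i, hi⟩ := (Finsupp.sum_eq_one_iff m).mp h1
        refine ⟨i, hi.symm ▸ rfl, ?_⟩
        funext u
        by_cases huv : u = v
        · subst huv; simp [o1, hfv]
        · simp [o1, huv, hfu' u huv, z]
      · intro u hu
        rw [hfu' u (Finset.ne_of_mem_erase hu)]
        rfl
  rcases key with ⟨i, rfl, rfl⟩ | ⟨w, hwv, rfl, rfl⟩
  · cases v with
    | none =>
      obtain ⟨j, rfl⟩ := hc_surj hh
      exact main_ce i j
    | some j =>
      obtain rfl := hl_surj j hh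
      exact main_le i j
  · cases v with
    | none =>
      obtain ⟨j, rfl⟩ := hc_surj hh
      cases w with
      | none => exact absurd rfl hwv
      | some i => exact main_cl i j
    | some j =>
      obtain rfl := hl_surj j hh
      cases w with
      | none => exact main_lv j
      | some i => exact main_ll i j (by simpa using hwv)

lemma cyc_le_N (x : SC ends) (hx : x ∈ cyc ends 1 2) : x ∈ N := by
  obtain ⟨h1, h2⟩ := hx
  have h1 : D ends x = 0 := h1
  have h2 : ∀ b ∈ x.support, degB ends b = 1 ∧ wtB ends b = 2 := h2
  have key : (q - q ∘ₗ S ∘ₗ D ends) x = 0 := by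
    rw [← Finsupp.sum_single x, Finsupp.sum, map_sum]
    apply Finset.sum_eq_zero
    intro b hb
    have := classify b (h2 b hb).1 (h2 b hb).2
    rw [show Finsupp.single b (x b) = x b • Finsupp.single b (1 : ℤ) by simp, map_smul]
    simp only [LinearMap.sub_apply, LinearMap.comp_apply]
    rw [← this, sub_self, smul_zero]
  simp only [LinearMap.sub_apply, LinearMap.comp_apply, h1, map_zero, sub_zero] at key
  simpa [q] using key

lemma F_comb (c : Fin 3 → ℤ) (j k : Fin 4) :
    F j k (c 0 • starCyc 1 2 + c 1 • starCyc 1 3 + c 2 • starCyc 2 3) =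
      c 0 * F j k (starCyc 1 2) + c 1 * F j k (starCyc 1 3) + c 2 * F j k (starCyc 2 3) := by
  simp

/-- `H₁(B₂(S₄))` — the homology of the Świątkowski complex of
the star graph with four edges in degree 1 and weight 2 — is free abelian of
rank 3, freely generated by the star classes `α_{123}, α_{124}, α_{134}`:
the star cycles are cycles of degree 1 and weight 2, and every such cycle is,
uniquely, a ℤ-linear combination of them modulo boundaries. -/
theorem H1_B2_star4_free_rank_three :
    (starCyc 1 2 ∈ cyc ends 1 2 ∧ starCyc 1 3 ∈ cyc ends 1 2 ∧
      starCyc 2 3 ∈ cyc ends 1 2) ∧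
    ∀ x ∈ cyc ends 1 2, ∃! c : Fin 3 → ℤ,
      x - (c 0 • starCyc 1 2 + c 1 • starCyc 1 3 + c 2 • starCyc 2 3)
        ∈ bdry ends 1 2 := by
  refine ⟨⟨starCyc_mem _ _, starCyc_mem _ _, starCyc_mem _ _⟩, ?_⟩
  intro x hx
  obtain ⟨y, hy, w, hw, hyw⟩ := Submodule.mem_sup.mp (cyc_le_N x hx)
  obtain ⟨a, b, c, rfl⟩ := Submodule.mem_span_triple.mp hw
  refine ⟨![a, b, c], ?_, ?_⟩
  · rw [← hyw]
    simpa using hy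
  · intro d hd
    have hF : ∀ (e : Fin 3 → ℤ),
        x - (e 0 • starCyc 1 2 + e 1 • starCyc 1 3 + e 2 • starCyc 2 3) ∈ bdry ends 1 2 →
        F 1 2 x = e 0 ∧ F 1 3 x = e 1 ∧ F 2 3 x = e 2 := by
      rintro e ⟨u, -, hu⟩
      have h : ∀ j k, F j k x =
          F j k (e 0 • starCyc 1 2 + e 1 • starCyc 1 3 + e 2 • starCyc 2 3) := by
        intro j k
        have := F_D j k u
        rw [hu, map_sub, sub_eq_zero] at this
        exact this
      refine ⟨?_, ?_, ?_⟩ <;> rw [h, F_comb] <;> simp [starCyc_eq, F_ce]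
    have h1 := hF d hd
    have h2 := hF ![a, b, c] (by rw [← hyw]; simpa using hy)
    funext i
    fin_cases i
    · exact h1.1.symm.trans h2.1
    · exact h1.2.1.symm.trans h2.2.1
    · exact h1.2.2.symm.trans h2.2.2

end Star4
end

section
/- In H₁(B₃(S₄)), the stabilized star classes satisfy the relation (e₄ − e₁)·α₁₂₃ − (e₃ − e₁)·α₁₂₄ + (e₂ − e₁)·α₁₃₄ = 0, and H₁(B₃(S₄)) is free abelian of rank 11, generated by the classes (e_i − e₁)·α_{1jk} (2 ≤ i ≤ 4, 2 ≤ j < k ≤ 4) and e₁·α_{1jk}, subject only to that relation. -/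
namespace Star4

open Swiatkowski

/-- The three index pairs `(j,k)` with `2 ≤ j < k ≤ 4` (shifted to start at
`0`), enumerating the star classes `α₁₂₃, α₁₂₄, α₁₃₄`. -/
def pairs : Fin 3 → Fin 4 × Fin 4 := ![(1, 2), (1, 3), (2, 3)]

/-- The twelve generators of `H₁(B₃(S₄))`: for each star class `α_{1jk}` the
stabilized classes `e₁·α_{1jk}` (second index `0`) and `(e_i − e₁)·α_{1jk}`
for `2 ≤ i ≤ 4` (second index `i − 1`, shifted). -/
noncomputable def gen (q : Fin 3 × Fin 4) : SC ends :=
  if q.2 = 0 then stab ends 0 (starCyc (pairs q.1).1 (pairs q.1).2)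
  else (stab ends q.2 - stab ends 0) (starCyc (pairs q.1).1 (pairs q.1).2)

/-- The coefficient vector of the single relation
`(e₄ − e₁)·α₁₂₃ − (e₃ − e₁)·α₁₂₄ + (e₂ − e₁)·α₁₃₄ = 0`. -/
def rel : Fin 3 × Fin 4 → ℤ := fun q =>
  if q = (0, 3) then 1 else if q = (1, 2) then -1 else if q = (2, 1) then 1 else 0

end Star4

namespace Swiatkowski

set_option linter.unusedSectionVars false
set_option linter.unusedSimpArgs false

variable {V E : Type} [Fintype V] [Fintype E] [DecidableEq V] [DecidableEq E]
variable (ends : E → V × V)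

lemma sgn_update (f : States ends) (w v : V) (x : VGen ends w) :
    sgn ends (Function.update f w x) v =
      if idx w < idx v ∧ x.isLeft ≠ (f w).isLeft then - sgn ends f v else sgn ends f v := by
  have key : ∀ g : States ends, sgn ends g v =
      ∏ u : V, (if idx u < idx v ∧ (g u).isLeft = true then (-1 : ℤ) else 1) := by
    intro g
    simp [sgn, Finset.prod_ite]
  rw [key, key, ← Finset.mul_prod_erase _ _ (Finset.mem_univ w),
    ← Finset.mul_prod_erase _ (fun u => if idx u < idx v ∧ (f u).isLeft = true then (-1 : ℤ) else 1)
      (Finset.mem_univ w)]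
  have h2 : ∏ u ∈ Finset.univ.erase w,
      (if idx u < idx v ∧ (Function.update f w x u).isLeft = true then (-1 : ℤ) else 1) =
      ∏ u ∈ Finset.univ.erase w, (if idx u < idx v ∧ (f u).isLeft = true then (-1 : ℤ) else 1) := by
    apply Finset.prod_congr rfl
    intro u hu
    rw [Function.update_of_ne (Finset.ne_of_mem_erase hu)]
  rw [h2, Function.update_self]
  by_cases h1 : idx w < idx v <;> cases hx : x.isLeft <;> cases hy : (f w).isLeft <;> simp [h1]

lemma sgn_sq (f : States ends) (v : V) : sgn ends f v * sgn ends f v = 1 := by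
  unfold sgn
  rw [← mul_pow]; simp

lemma idx_inj {v w : V} (h : v ≠ w) : idx v < idx w ∨ idx w < idx v := by
  apply lt_or_gt_of_ne
  intro h'
  exact h ((Fintype.equivFin V).injective (Fin.ext h'))

lemma sum_update_add {β : V → Type} (g : ∀ v, β v → ℕ) (f : ∀ v, β v) (v : V) (x : β v) :
    ∑ w, g w (Function.update f v x w) + g v (f v) = ∑ w, g w (f w) + g v x := by
  rw [← Finset.add_sum_erase _ _ (Finset.mem_univ v),
    ← Finset.add_sum_erase _ (fun w => g w (f w)) (Finset.mem_univ v)]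
  have h2 : ∑ u ∈ Finset.univ.erase v, g u (Function.update f v x u) =
      ∑ u ∈ Finset.univ.erase v, g u (f u) := by
    apply Finset.sum_congr rfl
    intro u hu
    rw [Function.update_of_ne (Finset.ne_of_mem_erase hu)]
  rw [h2, Function.update_self]
  ring

lemma degB_update (m m' : E →₀ ℕ) (f : States ends) (v : V) (x : VGen ends v) :
    degB ends (m', Function.update f v x) + (if (f v).isLeft = true then 1 else 0) =
      degB ends (m, f) + (if x.isLeft = true then 1 else 0) := by
  simp only [degB, Finset.card_filter]
  exact sum_update_add (fun v (y : VGen ends v) => if y.isLeft = true then 1 else 0) f v x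

lemma wtB_update (m : E →₀ ℕ) (f : States ends) (v : V) (x : VGen ends v) :
    wtB ends (m, Function.update f v x) + Sum.elim (fun _ => 1) (fun t => cond t 1 0) (f v) =
      wtB ends (m, f) + Sum.elim (fun _ => 1) (fun t => cond t 1 0) x := by
  simp only [wtB]
  have := sum_update_add (fun v (y : VGen ends v) =>
    (Sum.elim (fun _ => 1) (fun t => cond t 1 0) y : ℕ)) f v x
  simp only [add_assoc] at this ⊢
  rw [this]

lemma wtB_add_single (m : E →₀ ℕ) (f : States ends) (e : E) :
    wtB ends (m + Finsupp.single e 1, f) = wtB ends (m, f) + 1 := by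
  simp only [wtB]
  rw [Finsupp.sum_add_index' (by simp) (by simp), Finsupp.sum_single_index (by simp)]
  ring

/-- The local differential at `v`, on basis elements. -/
noncomputable def DvB (v : V) (b : Bas ends) : SC ends :=
  match b.2 v with
      | Sum.inl h =>
          sgn ends b.2 v •
            (Finsupp.single (b.1 + Finsupp.single h.1.1 1,
                Function.update b.2 v (Sum.inr false)) (1 : ℤ)
              - Finsupp.single (b.1, Function.update b.2 v (Sum.inr true)) (1 : ℤ))
      | Sum.inr _ => 0

lemma DvB_inl {v : V} {b : Bas ends} {h} (hb : b.2 v = Sum.inl h) :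
    DvB ends v b = sgn ends b.2 v •
            (Finsupp.single (b.1 + Finsupp.single h.1.1 1,
                Function.update b.2 v (Sum.inr false)) (1 : ℤ)
              - Finsupp.single (b.1, Function.update b.2 v (Sum.inr true)) (1 : ℤ)) := by
  simp only [DvB, hb]

lemma DvB_inr {v : V} {b : Bas ends} {t} (hb : b.2 v = Sum.inr t) :
    DvB ends v b = 0 := by
  simp only [DvB, hb]

/-- The local differential at `v`. -/
noncomputable def Dv (v : V) : SC ends →ₗ[ℤ] SC ends :=
  Finsupp.linearCombination ℤ (DvB ends v)

lemma Dv_single (v : V) (b : Bas ends) : Dv ends v (Finsupp.single b 1) = DvB ends v b := by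
  simp [Dv]

lemma D_eq : D ends = ∑ v, Dv ends v := by
  apply Finsupp.lhom_ext'
  intro b
  apply LinearMap.ext_ring
  simp only [LinearMap.comp_apply, Finsupp.lsingle_apply, LinearMap.sum_apply, Dv_single]
  simp only [D, Finsupp.linearCombination_single, one_smul]
  rfl

/-- The local homotopy at `v`, on basis elements. -/
noncomputable def svB (v : V) (h0 : {h : E × Bool // vtx ends h = v}) (b : Bas ends) : SC ends :=
  match b.2 v with
      | Sum.inr true =>
          - sgn ends b.2 v • Finsupp.single (b.1, Function.update b.2 v (Sum.inl h0)) (1 : ℤ)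
      | _ => 0

lemma svB_true {v : V} (h0) {b : Bas ends} (hb : b.2 v = Sum.inr true) :
    svB ends v h0 b = - sgn ends b.2 v •
      Finsupp.single (b.1, Function.update b.2 v (Sum.inl h0)) (1 : ℤ) := by
  simp only [svB, hb]

lemma svB_false {v : V} (h0) {b : Bas ends} (hb : b.2 v = Sum.inr false) :
    svB ends v h0 b = 0 := by
  simp only [svB, hb]

lemma svB_inl {v : V} (h0) {b : Bas ends} {h} (hb : b.2 v = Sum.inl h) :
    svB ends v h0 b = 0 := by
  simp only [svB, hb]

/-- The local homotopy at `v`. -/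
noncomputable def sv (v : V) (h0 : {h : E × Bool // vtx ends h = v}) : SC ends →ₗ[ℤ] SC ends :=
  Finsupp.linearCombination ℤ (svB ends v h0)

lemma sv_single (v : V) (h0) (b : Bas ends) :
    sv ends v h0 (Finsupp.single b 1) = svB ends v h0 b := by
  simp [sv]

lemma sgn_anti {v w : V} (hvw : v ≠ w) (f : States ends) (x : VGen ends v) (y : VGen ends w)
    (hx : x.isLeft ≠ (f v).isLeft) (hy : y.isLeft ≠ (f w).isLeft) :
    sgn ends f w * sgn ends (Function.update f w y) v =
      - (sgn ends f v * sgn ends (Function.update f v x) w) := by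
  rw [sgn_update, sgn_update]
  rcases idx_inj hvw with h | h
  · rw [if_neg (by omega), if_pos ⟨h, hx⟩]; ring
  · rw [if_pos ⟨h, hy⟩, if_neg (by omega)]; ring

lemma Dv_anti {v w : V} (hvw : v ≠ w) (b : Bas ends) :
    Dv ends v (Dv ends w (Finsupp.single b 1)) = - Dv ends w (Dv ends v (Finsupp.single b 1)) := by
  obtain ⟨m, f⟩ := b
  rw [Dv_single, Dv_single]
  rcases hw : f w with h | t
  · rcases hv : f v with h' | t'
    · rw [DvB_inl ends (b := (m, f)) hw, DvB_inl ends (b := (m, f)) hv]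
      simp only [map_smul, map_sub, Dv_single]
      rw [DvB_inl ends (h := h') (by simp [Function.update_of_ne hvw, hv]),
        DvB_inl ends (h := h') (by simp [Function.update_of_ne hvw, hv]),
        DvB_inl ends (h := h) (by simp [Function.update_of_ne hvw.symm, hw]),
        DvB_inl ends (h := h) (by simp [Function.update_of_ne hvw.symm, hw])]
      have e1 := sgn_anti ends hvw f (Sum.inr true) (Sum.inr true) (by simp [hv]) (by simp [hw])
      have e2 : sgn ends (Function.update f w (Sum.inr false)) v =
          sgn ends (Function.update f w (Sum.inr true)) v := by
        rw [sgn_update, sgn_update]; simp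
      have e3 : sgn ends (Function.update f v (Sum.inr false)) w =
          sgn ends (Function.update f v (Sum.inr true)) w := by
        rw [sgn_update, sgn_update]; simp
      rw [e2, e3, ← smul_sub, ← smul_sub, smul_smul, smul_smul, e1, neg_smul]
      congr 2
      simp only [Function.update_comm hvw]
      rw [add_right_comm]
      abel
    · rw [DvB_inl ends (b := (m, f)) hw, DvB_inr ends (b := (m, f)) hv]
      simp only [map_smul, map_sub, Dv_single]
      rw [DvB_inr ends (t := t') (by simp [Function.update_of_ne hvw, hv]),
        DvB_inr ends (t := t') (by simp [Function.update_of_ne hvw, hv])]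
      simp
  · rw [DvB_inr ends (b := (m, f)) hw]
    rcases hv : f v with h' | t'
    · rw [DvB_inl ends (b := (m, f)) hv]
      simp only [map_smul, map_sub, Dv_single]
      rw [DvB_inr ends (t := t) (by simp [Function.update_of_ne hvw.symm, hw]),
        DvB_inr ends (t := t) (by simp [Function.update_of_ne hvw.symm, hw])]
      simp
    · rw [DvB_inr ends (b := (m, f)) hv]
      simp

lemma Dv_sq (v : V) (b : Bas ends) : Dv ends v (Dv ends v (Finsupp.single b 1)) = 0 := by
  obtain ⟨m, f⟩ := b
  rw [Dv_single]
  rcases hv : f v with h | t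
  · rw [DvB_inl ends (b := (m, f)) hv]
    simp only [map_smul, map_sub, Dv_single]
    rw [DvB_inr ends (t := false) (by simp), DvB_inr ends (t := true) (by simp)]
    simp
  · rw [DvB_inr ends (b := (m, f)) hv]
    simp

lemma sv_anti {v w : V} (hvw : v ≠ w) (h0) (b : Bas ends) :
    sv ends v h0 (Dv ends w (Finsupp.single b 1)) =
      - Dv ends w (sv ends v h0 (Finsupp.single b 1)) := by
  obtain ⟨m, f⟩ := b
  rw [Dv_single, sv_single]
  rcases hw : f w with h | t
  · rw [DvB_inl ends (b := (m, f)) hw]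
    rcases hv : f v with h' | _ | _
    · rw [svB_inl ends h0 (b := (m, f)) hv]
      simp only [map_smul, map_sub, sv_single]
      rw [svB_inl ends h0 (h := h') (by simp [Function.update_of_ne hvw, hv]),
        svB_inl ends h0 (h := h') (by simp [Function.update_of_ne hvw, hv])]
      simp
    · rw [svB_false ends h0 (b := (m, f)) hv]
      simp only [map_smul, map_sub, sv_single]
      rw [svB_false ends h0 (by simp [Function.update_of_ne hvw, hv]),
        svB_false ends h0 (by simp [Function.update_of_ne hvw, hv])]
      simp
    · rw [svB_true ends h0 (b := (m, f)) hv]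
      simp only [map_smul, map_sub, sv_single, Dv_single]
      rw [svB_true ends h0 (by simp [Function.update_of_ne hvw, hv]),
        svB_true ends h0 (by simp [Function.update_of_ne hvw, hv]),
        DvB_inl ends (h := h) (by simp [Function.update_of_ne hvw.symm, hw])]
      have e1 := sgn_anti ends hvw f (Sum.inl h0) (Sum.inr true) (by simp [hv]) (by simp [hw])
      have e2 : sgn ends (Function.update f w (Sum.inr false)) v =
          sgn ends (Function.update f w (Sum.inr true)) v := by
        rw [sgn_update, sgn_update]; simp
      simp only [e2]
      rw [← smul_sub, smul_smul, smul_smul, mul_neg, e1, neg_mul, neg_smul]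
      simp only [Function.update_comm hvw]
  · rw [DvB_inr ends (b := (m, f)) hw]
    rcases hv : f v with h' | _ | _
    · rw [svB_inl ends h0 (b := (m, f)) hv]; simp
    · rw [svB_false ends h0 (b := (m, f)) hv]; simp
    · rw [svB_true ends h0 (b := (m, f)) hv]
      simp only [map_smul, Dv_single]
      rw [DvB_inr ends (t := t) (by simp [Function.update_of_ne hvw.symm, hw])]
      simp

/-- The retraction at `v`, on basis elements, for a vertex with a single half-edge `h0`. -/
noncomputable def rvB (v : V) (h0 : {h : E × Bool // vtx ends h = v}) (b : Bas ends) : SC ends :=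
  match b.2 v with
      | Sum.inr true =>
          Finsupp.single (b.1 + Finsupp.single h0.1.1 1,
            Function.update b.2 v (Sum.inr false)) (1 : ℤ)
      | Sum.inr false => Finsupp.single b 1
      | Sum.inl _ => 0

/-- The retraction at `v`. -/
noncomputable def rv (v : V) (h0 : {h : E × Bool // vtx ends h = v}) : SC ends →ₗ[ℤ] SC ends :=
  Finsupp.linearCombination ℤ (rvB ends v h0)

lemma rv_single (v : V) (h0) (b : Bas ends) :
    rv ends v h0 (Finsupp.single b 1) = rvB ends v h0 b := by
  simp [rv]

lemma sv_Dv {v : V} (h0) (huniq : ∀ h, h = h0) (b : Bas ends) :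
    sv ends v h0 (Dv ends v (Finsupp.single b 1)) + Dv ends v (sv ends v h0 (Finsupp.single b 1)) =
      Finsupp.single b 1 - rv ends v h0 (Finsupp.single b 1) := by
  obtain ⟨m, f⟩ := b
  rw [Dv_single, sv_single, rv_single]
  rcases hv : f v with h' | _ | _
  · rw [svB_inl ends h0 (b := (m, f)) hv, DvB_inl ends (b := (m, f)) hv]
    simp only [map_smul, map_sub, sv_single]
    rw [svB_false ends h0 (by simp), svB_true ends h0 (by simp)]
    simp only [rvB, hv]
    obtain rfl := huniq h'
    have e : Function.update f v (Sum.inl h') = f := by rw [← hv]; simp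
    rw [sgn_update]
    simp [smul_smul, sgn_sq, e]
  · rw [svB_false ends h0 (b := (m, f)) hv, DvB_inr ends (b := (m, f)) hv]
    simp [rvB, hv]
  · rw [svB_true ends h0 (b := (m, f)) hv, DvB_inr ends (b := (m, f)) hv]
    simp only [map_smul, Dv_single]
    rw [DvB_inl ends (h := h0) (by simp)]
    have e : Function.update f v (Sum.inr true) = f := by rw [← hv]; simp
    rw [sgn_update]
    simp [smul_smul, sgn_sq, e, rvB, hv]

lemma homotopy {v : V} (h0) (huniq : ∀ h, h = h0) (x : SC ends) :
    sv ends v h0 (D ends x) + D ends (sv ends v h0 x) = x - rv ends v h0 x := by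
  have : sv ends v h0 ∘ₗ D ends + D ends ∘ₗ sv ends v h0 = LinearMap.id - rv ends v h0 := by
    apply Finsupp.lhom_ext'
    intro b
    apply LinearMap.ext_ring
    simp only [LinearMap.comp_apply, Finsupp.lsingle_apply, LinearMap.add_apply,
      LinearMap.sub_apply, LinearMap.id_apply, D_eq, LinearMap.sum_apply, map_sum]
    rw [← Finset.sum_add_distrib, Finset.sum_eq_single v, sv_Dv ends h0 huniq]
    · intro w _ hw
      rw [sv_anti ends hw.symm]; simp
    · simp
  exact LinearMap.congr_fun this x

lemma D_D (x : SC ends) : D ends (D ends x) = 0 := by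
  have : D ends ∘ₗ D ends = 0 := by
    apply Finsupp.lhom_ext'
    intro b
    apply LinearMap.ext_ring
    simp only [LinearMap.comp_apply, Finsupp.lsingle_apply, LinearMap.zero_apply,
      D_eq, LinearMap.sum_apply, map_sum]
    set S := ∑ v, ∑ w, Dv ends w (Dv ends v (Finsupp.single b (1 : ℤ))) with hS
    have h : S = - S := by
      conv_lhs => rw [hS, Finset.sum_comm]
      rw [hS, ← Finset.sum_neg_distrib]
      refine Finset.sum_congr rfl fun v _ => ?_
      rw [← Finset.sum_neg_distrib]
      refine Finset.sum_congr rfl fun w _ => ?_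
      by_cases hvw : v = w
      · subst hvw; rw [Dv_sq]; simp
      · exact Dv_anti ends hvw b
    exact self_eq_neg.mp h
  exact LinearMap.congr_fun this x

lemma rv_D {v : V} (h0) (huniq : ∀ h, h = h0) (x : SC ends) :
    rv ends v h0 (D ends x) = D ends (rv ends v h0 x) := by
  have h1 := homotopy ends h0 huniq x
  have h2 := homotopy ends h0 huniq (D ends x)
  rw [D_D, map_zero, zero_add] at h2
  have h3 := congrArg (D ends) h1
  rw [map_add, D_D, add_zero, map_sub, h2] at h3
  exact sub_right_injective h3

/-- Chains all of whose basis elements satisfy `P`. -/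
def suppIn (P : Bas ends → Prop) : Submodule ℤ (SC ends) := Finsupp.supported ℤ ℤ {b | P b}

lemma map_suppIn {P Q : Bas ends → Prop} (T : SC ends →ₗ[ℤ] SC ends)
    (h : ∀ b, P b → T (Finsupp.single b 1) ∈ suppIn ends Q) {x : SC ends}
    (hx : x ∈ suppIn ends P) : T x ∈ suppIn ends Q := by
  have hx' : x ∈ Submodule.span ℤ (Set.image (fun b => Finsupp.single b (1 : ℤ)) {b | P b}) := by
    rw [← Finsupp.supported_eq_span_single]; exact hx
  clear hx
  induction hx' using Submodule.span_induction with
  | mem x hx =>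
    obtain ⟨b, hb, rfl⟩ := hx
    exact h b hb
  | zero => simp
  | add x y hx hy ihx ihy =>
    rw [map_add]
    exact add_mem ihx ihy
  | smul a x hx ih =>
    rw [map_smul]
    exact Submodule.smul_mem _ _ ih

lemma single_suppIn {P : Bas ends → Prop} {b : Bas ends} (h : P b) :
    Finsupp.single b (1 : ℤ) ∈ suppIn ends P :=
  Finsupp.single_mem_supported ℤ 1 h

lemma mem_suppIn {P : Bas ends → Prop} {x : SC ends} :
    x ∈ suppIn ends P ↔ ∀ b, x b ≠ 0 → P b := by
  simp [suppIn, Finsupp.mem_supported, Set.subset_def]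

lemma hasDW_eq (i k : ℕ) :
    hasDW ends i k = suppIn ends (fun b => degB ends b = i ∧ wtB ends b = k) := by
  ext x
  rw [mem_suppIn]
  change (∀ b ∈ x.support, _) ↔ _
  simp

lemma sv_hasDW {v : V} (h0) {i k : ℕ} {x : SC ends} (hx : x ∈ hasDW ends i k) :
    sv ends v h0 x ∈ hasDW ends (i + 1) k := by
  rw [hasDW_eq] at *
  refine map_suppIn ends _ ?_ hx
  rintro ⟨m, f⟩ ⟨h1, h2⟩
  rw [sv_single]
  rcases hv : f v with h' | _ | _
  · rw [svB_inl ends h0 (b := (m, f)) hv]; simp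
  · rw [svB_false ends h0 (b := (m, f)) hv]; simp
  · rw [svB_true ends h0 (b := (m, f)) hv]
    apply Submodule.smul_mem
    apply single_suppIn
    have e1 := degB_update ends m m f v (Sum.inl h0)
    have e2 := wtB_update ends m f v (Sum.inl h0)
    simp [hv] at e1 e2
    exact ⟨by simpa [h1] using e1, by simpa [h2] using e2⟩

/-- The retraction preserves degree and weight, empties the slot `v`, and keeps other
empty slots empty. -/
lemma rv_suppIn {v : V} (h0) {i k : ℕ} (Z : Set V) {x : SC ends}
    (hx : x ∈ suppIn ends (fun b => (degB ends b = i ∧ wtB ends b = k) ∧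
      ∀ w ∈ Z, b.2 w = Sum.inr false)) :
    rv ends v h0 x ∈ suppIn ends (fun b => (degB ends b = i ∧ wtB ends b = k) ∧
      ∀ w ∈ insert v Z, b.2 w = Sum.inr false) := by
  refine map_suppIn ends _ ?_ hx
  rintro ⟨m, f⟩ ⟨⟨h1, h2⟩, h3⟩
  rw [rv_single]
  rcases hv : f v with h' | _ | _
  · simp [rvB, hv]
  · simp only [rvB, hv]
    apply single_suppIn
    refine ⟨⟨h1, h2⟩, ?_⟩
    rintro w (rfl | hw)
    · exact hv
    · exact h3 w hw
  · simp only [rvB, hv]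
    apply single_suppIn
    have e1 := degB_update ends m (m + Finsupp.single h0.1.1 1) f v (Sum.inr false)
    have e2 := wtB_update ends m f v (Sum.inr false)
    have e3 := wtB_add_single ends m (Function.update f v (Sum.inr false)) h0.1.1
    simp [hv] at e1 e2
    refine ⟨⟨by simpa [h1] using e1, by omega⟩, ?_⟩
    intro w hw
    by_cases hwv : w = v
    · subst hwv; simp
    · simp only [Function.update_of_ne hwv]
      exact h3 w (hw.resolve_left hwv)

lemma rv_fix {v : V} (h0) {x : SC ends}
    (hx : x ∈ suppIn ends (fun b => b.2 v = Sum.inr false)) : rv ends v h0 x = x := by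
  have : rv ends v h0 x - (LinearMap.id : SC ends →ₗ[ℤ] SC ends) x ∈ suppIn ends (fun _ => False) := by
    rw [← LinearMap.sub_apply]
    refine map_suppIn ends _ ?_ hx
    rintro ⟨m, f⟩ h
    rw [LinearMap.sub_apply, rv_single]
    simp only at h
    simp [rvB, h]
  rw [mem_suppIn] at this
  rw [← sub_eq_zero]
  ext b
  by_contra h
  exact this b h

end Swiatkowski

namespace Star4

open Swiatkowski

/-- The half-edge at the leaf `i`. -/
def leafH (i : Fin 4) : {h : Fin 4 × Bool // vtx ends h = some i} := ⟨(i, true), rfl⟩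

lemma leafH_uniq (i : Fin 4) : ∀ h, h = leafH i := by
  rintro ⟨⟨e, b⟩, h⟩
  cases b
  · simp [vtx, ends] at h
  · simp only [vtx, ends, cond_true, Option.some.injEq] at h
    subst h
    rfl

/-- The retraction at the leaf `i`. -/
noncomputable def ret (i : Fin 4) : SC ends →ₗ[ℤ] SC ends := rv ends (some i) (leafH i)

/-- The retraction at all leaves. -/
noncomputable def R : SC ends →ₗ[ℤ] SC ends := ret 0 ∘ₗ ret 1 ∘ₗ ret 2 ∘ₗ ret 3

lemma ret_D (i : Fin 4) (x : SC ends) : ret i (D ends x) = D ends (ret i x) :=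
  rv_D ends (leafH i) (leafH_uniq i) x

lemma R_D (x : SC ends) : R (D ends x) = D ends (R x) := by
  simp only [R, LinearMap.comp_apply, ret_D]

lemma ret_hasDW (j : Fin 4) {i k : ℕ} {x : SC ends} (hx : x ∈ hasDW ends i k) :
    ret j x ∈ hasDW ends i k := by
  rw [hasDW_eq] at *
  have h1 : x ∈ suppIn ends (fun b => (degB ends b = i ∧ wtB ends b = k) ∧
      ∀ w ∈ (∅ : Set (Option (Fin 4))), b.2 w = Sum.inr false) := by
    rw [mem_suppIn] at *
    intro b hb
    exact ⟨hx b hb, by simp⟩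
  have h2 := rv_suppIn ends (leafH j) _ h1
  rw [mem_suppIn] at *
  intro b hb
  exact (h2 b hb).1

lemma R_suppIn {i k : ℕ} {x : SC ends} (hx : x ∈ hasDW ends i k) :
    R x ∈ suppIn ends (fun b => (degB ends b = i ∧ wtB ends b = k) ∧
      ∀ j : Fin 4, b.2 (some j) = Sum.inr false) := by
  rw [hasDW_eq] at *
  have h1 : x ∈ suppIn ends (fun b => (degB ends b = i ∧ wtB ends b = k) ∧
      ∀ w ∈ (∅ : Set (Option (Fin 4))), b.2 w = Sum.inr false) := by
    rw [mem_suppIn] at *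
    intro b hb
    exact ⟨hx b hb, by simp⟩
  have h2 := rv_suppIn ends (leafH 0) _ (rv_suppIn ends (leafH 1) _ (rv_suppIn ends (leafH 2) _
    (rv_suppIn ends (leafH 3) _ h1)))
  rw [mem_suppIn] at *
  intro b hb
  obtain ⟨h3, h4⟩ := h2 b hb
  refine ⟨h3, fun j => h4 _ ?_⟩
  fin_cases j <;> simp

lemma ret_cyc (j : Fin 4) {x : SC ends} (hx : x ∈ cyc ends 1 3) :
    ret j x ∈ cyc ends 1 3 ∧ x - ret j x ∈ bdry ends 1 3 := by
  obtain ⟨h1, h2⟩ := hx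
  have h1' : D ends x = 0 := h1
  refine ⟨⟨?_, ret_hasDW j h2⟩, ?_⟩
  · change D ends (ret j x) = 0
    rw [← ret_D, h1', map_zero]
  · have h := homotopy ends (leafH j) (leafH_uniq j) x
    rw [h1', map_zero, zero_add] at h
    exact ⟨_, sv_hasDW ends (leafH j) h2, h⟩

lemma R_cyc {x : SC ends} (hx : x ∈ cyc ends 1 3) :
    R x ∈ cyc ends 1 3 ∧ x - R x ∈ bdry ends 1 3 := by
  obtain ⟨a3, b3⟩ := ret_cyc 3 hx
  obtain ⟨a2, b2⟩ := ret_cyc 2 a3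
  obtain ⟨a1, b1⟩ := ret_cyc 1 a2
  obtain ⟨a0, b0⟩ := ret_cyc 0 a1
  refine ⟨a0, ?_⟩
  have := add_mem (add_mem b3 b2) (add_mem b1 b0)
  convert this using 1
  simp only [R, LinearMap.comp_apply]
  abel

lemma degB_center {b : Bas ends} (h : ∀ j : Fin 4, b.2 (some j) = Sum.inr false) :
    degB ends b = if (b.2 none).isLeft = true then 1 else 0 := by
  simp only [degB, Finset.card_filter, Fintype.sum_option, h]
  simp

lemma R_bdry {x : SC ends} (hx : x ∈ bdry ends 1 3) : R x = 0 := by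
  obtain ⟨y, hy, rfl⟩ := hx
  have h : R y = 0 := by
    have := R_suppIn hy
    rw [mem_suppIn] at this
    ext b
    by_contra hb
    obtain ⟨⟨h1, _⟩, h2⟩ := this b hb
    rw [degB_center h2] at h1
    split_ifs at h1
    omega
  rw [R_D, h, map_zero]

/-- The exponent vector of a quadratic monomial. -/
noncomputable abbrev q2 (i k : Fin 4) : Fin 4 →₀ ℕ := Finsupp.single i 1 + Finsupp.single k 1

lemma q2_exists (m : Fin 4 →₀ ℕ) (h : (m.sum fun _ n => n) = 2) : ∃ i k, m = q2 i k := by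
  have h1 : Multiset.card (Finsupp.toMultiset m) = 2 := by
    rw [Finsupp.card_toMultiset]; exact h
  obtain ⟨i, k, hik⟩ := Multiset.card_eq_two.mp h1
  refine ⟨i, k, ?_⟩
  apply Multiset.toFinsupp.symm.injective
  change Finsupp.toMultiset m = Finsupp.toMultiset (q2 i k)
  rw [hik]
  simp [q2]

/-- Chains supported on half-edges at the centre and empty leaves. -/
abbrev Wp : Bas ends → Prop := fun b => ∃ i k j, b = (q2 i k, stateH j)

lemma R_W {x : SC ends} (hx : x ∈ hasDW ends 1 3) : R x ∈ suppIn ends Wp := by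
  have := R_suppIn hx
  rw [mem_suppIn] at *
  intro b hb
  obtain ⟨⟨h1, h2⟩, h3⟩ := this b hb
  obtain ⟨m, f⟩ := b
  rw [degB_center h3] at h1
  simp only at h3 h1
  rcases hf : f none with ⟨⟨e, t⟩, h⟩ | t
  · have ht : t = false := by
      cases t
      · rfl
      · simp [vtx, ends] at h
    subst ht
    have hs : f = stateH e := by
      funext v
      cases v with
      | none => exact hf
      | some i => exact h3 i
    subst hs
    have h4 : (m.sum fun _ n => n) = 2 := by
      simp only [wtB, Fintype.sum_option, stateH] at h2
      simp at h2
      exact h2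
    obtain ⟨i, k, rfl⟩ := q2_exists m h4
    exact ⟨i, k, e, rfl⟩
  · simp [hf] at h1

lemma R_fix {x : SC ends} (hx : x ∈ suppIn ends Wp) : R x = x := by
  have h : ∀ i, ret i x = x := by
    intro i
    apply rv_fix
    rw [mem_suppIn] at *
    intro b hb
    obtain ⟨i, k, j, rfl⟩ := hx b hb
    rfl
  simp [R, h]

lemma W_hasDW {x : SC ends} (hx : x ∈ suppIn ends Wp) : x ∈ hasDW ends 1 3 := by
  rw [hasDW_eq]
  rw [mem_suppIn] at *
  intro b hb
  obtain ⟨i, k, j, rfl⟩ := hx b hb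
  constructor
  · rw [degB_center (fun _ => rfl)]; simp [stateH]
  · simp only [wtB, Fintype.sum_option, stateH]
    rw [Finsupp.sum_add_index' (by simp) (by simp), Finsupp.sum_single_index (by simp),
      Finsupp.sum_single_index (by simp)]
    simp

/-- The empty state. -/
def stO : States ends := fun _ => Sum.inr false

/-- The state with the central vertex occupied. -/
def stV : States ends := fun v =>
  match v with
  | none => Sum.inr true
  | some _ => Sum.inr false

lemma D_stateH (m : Fin 4 →₀ ℕ) (j : Fin 4) :
    D ends (Finsupp.single (m, stateH j) 1) =
      Finsupp.single (m + Finsupp.single j 1, stO) 1 - Finsupp.single (m, stV) 1 := by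
  have e1 : Function.update (stateH j) none (Sum.inr false) = stO := by
    funext v; cases v <;> rfl
  have e2 : Function.update (stateH j) none (Sum.inr true) = stV := by
    funext v; cases v <;> rfl
  have e3 : sgn ends (stateH j) none = 1 := by
    unfold sgn
    rw [Finset.filter_false_of_mem]
    · simp
    · rintro (_ | i) _
      · simp
      · simp [stateH]
  rw [D_eq, LinearMap.sum_apply, Fintype.sum_option, Finset.sum_eq_zero, add_zero, Dv_single,
    DvB_inl ends (v := none) (h := ⟨(j, false), rfl⟩) (by rfl), e1, e2, e3, one_smul]
  intro i _
  rw [Dv_single, DvB_inr ends (t := false) (by rfl)]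

lemma stO_ne_stV : stO ≠ stV := by
  intro h
  have := congrFun h none
  simp [stO, stV] at this

lemma stateH_inj {i j : Fin 4} : stateH i = stateH j ↔ i = j := by
  constructor
  · intro h
    have := congrFun h none
    simp only [stateH, Sum.inl.injEq] at this
    exact congrArg (fun y => y.1.1) this
  · rintro rfl; rfl

lemma functional_ext {x : SC ends} (hx : x ∈ suppIn ends Wp) (F G : SC ends →ₗ[ℤ] ℤ)
    (h : ∀ i k j, F (Finsupp.single (q2 i k, stateH j) 1) = G (Finsupp.single (q2 i k, stateH j) 1)) :
    F x = G x := by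
  have hx' : x ∈ Submodule.span ℤ (Set.image (fun b => Finsupp.single b (1 : ℤ)) {b | Wp b}) := by
    rw [← Finsupp.supported_eq_span_single]; exact hx
  refine LinearMap.eqOn_span ?_ hx'
  rintro _ ⟨b, ⟨i, k, j, rfl⟩, rfl⟩
  exact h i k j

lemma D_coeff_V {x : SC ends} (hx : x ∈ suppIn ends Wp) (m : Fin 4 →₀ ℕ) :
    D ends x (m, stV) = - ∑ j, x (m, stateH j) := by
  have := functional_ext hx (Finsupp.lapply (m, stV) ∘ₗ D ends)
    (- ∑ j, Finsupp.lapply (m, stateH j)) (by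
      intro i k j
      simp only [LinearMap.comp_apply, D_stateH, map_sub, Finsupp.lapply_apply,
        LinearMap.neg_apply, LinearMap.sum_apply, Finsupp.single_apply, Prod.mk.injEq,
        stateH_inj, stO_ne_stV]
      by_cases h : q2 i k = m <;> simp [h])
  simpa using this

lemma D_coeff_O {x : SC ends} (hx : x ∈ suppIn ends Wp) (m : Fin 4 →₀ ℕ) :
    D ends x (m, stO) =
      ∑ j, if m j = 0 then 0 else x (m - Finsupp.single j 1, stateH j) := by
  have := functional_ext hx (Finsupp.lapply (m, stO) ∘ₗ D ends)
    (∑ j, if m j = 0 then 0 else Finsupp.lapply (m - Finsupp.single j 1, stateH j)) (by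
      intro i k j
      simp only [LinearMap.comp_apply, D_stateH, map_sub, Finsupp.lapply_apply,
        LinearMap.sum_apply]
      rw [Finset.sum_eq_single j]
      · simp only [Finsupp.single_apply, Prod.mk.injEq, stO_ne_stV.symm, and_false, if_false,
          and_true, sub_zero]
        by_cases hm : m j = 0
        · rw [if_neg, if_pos hm]
          · simp
          · rintro rfl
            simp at hm
        · rw [if_neg hm]
          simp only [Finsupp.lapply_apply, Finsupp.single_apply, Prod.mk.injEq, and_true]
          have hle : Finsupp.single j 1 ≤ m := by
            rw [Finsupp.single_le_iff]; omega
          congr 1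
          rw [eq_iff_iff]
          exact (eq_tsub_iff_add_eq_of_le hle).symm
      · intro l _ hl
        split_ifs
        · simp
        · simp [stateH_inj, hl.symm]
      · simp)
  rw [LinearMap.comp_apply, Finsupp.lapply_apply, LinearMap.sum_apply] at this
  rw [this]
  refine Finset.sum_congr rfl fun j _ => ?_
  split_ifs <;> simp

/-- Coefficients of a chain in the monomial basis. -/
noncomputable def A (x : SC ends) (i k j : Fin 4) : ℤ := x (q2 i k, stateH j)

lemma A_symm (x : SC ends) (i k j : Fin 4) : A x i k j = A x k i j := by
  simp only [A, q2, add_comm]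

lemma A_ext {x y : SC ends} (hx : x ∈ suppIn ends Wp) (hy : y ∈ suppIn ends Wp)
    (h : ∀ i k j, A x i k j = A y i k j) : x = y := by
  ext b
  by_cases hb : Wp b
  · obtain ⟨i, k, j, rfl⟩ := hb
    exact h i k j
  · rw [mem_suppIn] at hx hy
    rw [not_imp_comm.mp (hx b) hb, not_imp_comm.mp (hy b) hb]

lemma A_rel0 {x : SC ends} (hx : x ∈ suppIn ends Wp) (hD : D ends x = 0) (i k : Fin 4) :
    A x i k 0 + A x i k 1 + A x i k 2 + A x i k 3 = 0 := by
  have := D_coeff_V hx (q2 i k)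
  rw [hD, Fin.sum_univ_four] at this
  simp only [A]
  simp at this
  linarith

lemma A_rel1 {x : SC ends} (hx : x ∈ suppIn ends Wp) (hD : D ends x = 0) (a : Fin 4) :
    A x a a a = 0 := by
  have := D_coeff_O hx (q2 a a + Finsupp.single a 1)
  rw [hD, Finset.sum_eq_single a] at this
  · simp at this
    exact this.symm
  · intro b _ hb
    simp [hb.symm]
  · simp

lemma A_rel2 {x : SC ends} (hx : x ∈ suppIn ends Wp) (hD : D ends x = 0) {a b : Fin 4}
    (hab : a ≠ b) : A x a a b + A x a b a = 0 := by
  have := D_coeff_O hx (q2 a a + Finsupp.single b 1)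
  rw [hD, ← Finset.sum_subset (Finset.subset_univ {a, b}), Finset.sum_pair hab] at this
  · have e : q2 a a + Finsupp.single b 1 - Finsupp.single a 1 = q2 a b := by
      rw [q2, add_assoc, add_tsub_cancel_left]
    rw [e] at this
    simp at this
    simp only [A]
    linarith
  · intro c _ hc
    simp only [Finset.mem_insert, Finset.mem_singleton, not_or] at hc
    simp [Ne.symm hc.1, Ne.symm hc.2]

lemma A_rel3 {x : SC ends} (hx : x ∈ suppIn ends Wp) (hD : D ends x = 0) {a b c : Fin 4}
    (hab : a ≠ b) (hac : a ≠ c) (hbc : b ≠ c) : A x b c a + A x a c b + A x a b c = 0 := by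
  have := D_coeff_O hx (q2 a b + Finsupp.single c 1)
  rw [hD, ← Finset.sum_subset (Finset.subset_univ {a, b, c}),
    Finset.sum_insert (by simp [hab, hac]), Finset.sum_pair hbc] at this
  · have e1 : q2 a b + Finsupp.single c 1 - Finsupp.single a 1 = q2 b c := by
      rw [q2, add_assoc, add_tsub_cancel_left]
    have e2 : q2 a b + Finsupp.single c 1 - Finsupp.single b 1 = q2 a c := by
      rw [q2, add_right_comm, add_tsub_cancel_right]
    rw [e1, e2] at this
    simp at this
    simp only [A]
    linarith
  · intro d _ hd
    simp only [Finset.mem_insert, Finset.mem_singleton, not_or] at hd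
    simp [Ne.symm hd.1, Ne.symm hd.2.1, Ne.symm hd.2.2]

/-- Basis chains. -/
noncomputable def M (a b j : Fin 4) : SC ends := Finsupp.single (q2 a b, stateH j) 1

lemma M_W (a b j : Fin 4) : M a b j ∈ suppIn ends Wp := single_suppIn ends ⟨a, b, j, rfl⟩

/-- Coefficient of a basis chain. -/
def mc (a b j i k l : Fin 4) : ℤ :=
  if ((a = i ∧ b = k) ∨ (a = k ∧ b = i)) ∧ j = l then 1 else 0

lemma A_M (a b j i k l : Fin 4) : A (M a b j) i k l = mc a b j i k l := by
  simp only [A, M, mc, Finsupp.single_apply, Prod.mk.injEq, stateH_inj]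
  congr 2
  rw [eq_iff_iff]
  constructor
  · intro h
    have h' := congrArg Finsupp.toMultiset h
    simp [q2] at h'
    have h2 : ({a, b} : Multiset (Fin 4)) = {i, k} := h'
    rw [Multiset.insert_eq_cons, Multiset.insert_eq_cons, Multiset.cons_eq_cons] at h2
    aesop
  · rintro (⟨rfl, rfl⟩ | ⟨rfl, rfl⟩)
    · rfl
    · exact add_comm _ _

/-- Stabilized star cycles. -/
noncomputable def G (i j k : Fin 4) : SC ends :=
  M i k 0 - M i k j + (M i j k - M i j 0) + (M i 0 j - M i 0 k)

lemma stab_star (i j k : Fin 4) : stab ends i (starCyc j k) = G i j k := by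
  have h : ∀ b l, stab ends i (stab ends b (sH l)) = M i b l := by
    intro b l
    simp [stab, sH, M, q2, Finsupp.lmapDomain_apply, Finsupp.mapDomain_single, add_comm]
  simp only [starCyc, map_add, map_sub, h, G]

lemma G_W (i j k : Fin 4) : G i j k ∈ suppIn ends Wp := by
  unfold G
  exact add_mem (add_mem (sub_mem (M_W _ _ _) (M_W _ _ _)) (sub_mem (M_W _ _ _) (M_W _ _ _)))
    (sub_mem (M_W _ _ _) (M_W _ _ _))

lemma D_G (i j k : Fin 4) : D ends (G i j k) = 0 := by
  have e1 : q2 i k + Finsupp.single 0 1 = q2 i 0 + Finsupp.single k 1 := add_right_comm _ _ _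
  have e2 : q2 i k + Finsupp.single j 1 = q2 i j + Finsupp.single k 1 := add_right_comm _ _ _
  have e3 : q2 i j + Finsupp.single 0 1 = q2 i 0 + Finsupp.single j 1 := add_right_comm _ _ _
  simp only [G, M, map_add, map_sub, D_stateH, e1, e2, e3]
  abel

lemma gen_eq (q : Fin 3 × Fin 4) : gen q =
    if q.2 = 0 then G 0 (pairs q.1).1 (pairs q.1).2
    else G q.2 (pairs q.1).1 (pairs q.1).2 - G 0 (pairs q.1).1 (pairs q.1).2 := by
  simp only [gen, LinearMap.sub_apply, stab_star]

lemma gen_W (q : Fin 3 × Fin 4) : gen q ∈ suppIn ends Wp := by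
  rw [gen_eq]
  split_ifs
  · exact G_W _ _ _
  · exact sub_mem (G_W _ _ _) (G_W _ _ _)

lemma gen_cyc (q : Fin 3 × Fin 4) : gen q ∈ cyc ends 1 3 := by
  refine ⟨?_, W_hasDW (gen_W q)⟩
  change D ends (gen q) = 0
  rw [gen_eq]
  split_ifs <;> simp [D_G]

/-- Coefficients of `G`. -/
def Gc (a b c i k l : Fin 4) : ℤ :=
  mc a c 0 i k l - mc a c b i k l + (mc a b c i k l - mc a b 0 i k l)
    + (mc a 0 b i k l - mc a 0 c i k l)

lemma A_G (a b c i k l : Fin 4) : A (G a b c) i k l = Gc a b c i k l := by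
  simp only [Gc, ← A_M]
  simp only [A, G, Finsupp.add_apply, Finsupp.sub_apply]

/-- Coefficients of `gen`. -/
def gc (q : Fin 3 × Fin 4) (i k l : Fin 4) : ℤ :=
  if q.2 = 0 then Gc 0 (pairs q.1).1 (pairs q.1).2 i k l
    else Gc q.2 (pairs q.1).1 (pairs q.1).2 i k l - Gc 0 (pairs q.1).1 (pairs q.1).2 i k l

lemma A_gen (q : Fin 3 × Fin 4) (i k l : Fin 4) : A (gen q) i k l = gc q i k l := by
  rw [gen_eq, gc]
  simp only [← A_G]
  split_ifs
  · rfl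
  · simp only [A, Finsupp.sub_apply]

lemma sum_W (c : Fin 3 × Fin 4 → ℤ) : ∑ q, c q • gen q ∈ suppIn ends Wp :=
  Submodule.sum_mem _ fun q _ => Submodule.smul_mem _ _ (gen_W q)

lemma A_sum (c : Fin 3 × Fin 4 → ℤ) (i k l : Fin 4) :
    A (∑ q, c q • gen q) i k l = ∑ q, c q * gc q i k l := by
  simp only [← A_gen]
  simp only [A, Finsupp.finsetSum_apply, Finsupp.smul_apply, smul_eq_mul]

end Star4

namespace Star4

open Swiatkowski

lemma sum_expand (c : Fin 3 × Fin 4 → ℤ) (i k l : Fin 4) :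
    ∑ q, c q * gc q i k l =
      c (0, 0) * gc (0, 0) i k l + c (0, 1) * gc (0, 1) i k l + c (0, 2) * gc (0, 2) i k l +
        c (0, 3) * gc (0, 3) i k l +
      (c (1, 0) * gc (1, 0) i k l + c (1, 1) * gc (1, 1) i k l + c (1, 2) * gc (1, 2) i k l +
        c (1, 3) * gc (1, 3) i k l) +
      (c (2, 0) * gc (2, 0) i k l + c (2, 1) * gc (2, 1) i k l + c (2, 2) * gc (2, 2) i k l +
        c (2, 3) * gc (2, 3) i k l) := by
  rw [Fintype.sum_prod_type, Fin.sum_univ_three]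
  simp only [Fin.sum_univ_four]

/-- The coefficients expressing a cycle in terms of the generators. -/
def coef (F : Fin 4 → Fin 4 → Fin 4 → ℤ) : Fin 3 × Fin 4 → ℤ := fun q =>
  ![![F 0 1 2 + 2 * F 1 1 2 + F 1 2 2 + F 1 3 2, F 1 1 2, - F 2 2 1, 0],
    ![F 0 1 3 + 2 * F 1 1 3 + F 1 2 3 + F 1 3 3, F 1 1 3, - F 2 3 1, - F 3 3 1],
    ![F 0 2 3 + F 1 2 3 + 2 * F 2 2 3 + F 2 3 3, - F 1 3 2, F 2 2 3, - F 3 3 2]] q.1 q.2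

set_option maxHeartbeats 4000000 in
lemma coef_spec (F : Fin 4 → Fin 4 → Fin 4 → ℤ) (hs : ∀ i k l, F i k l = F k i l)
    (h0 : ∀ i k, F i k 0 + F i k 1 + F i k 2 + F i k 3 = 0)
    (h1 : ∀ a, F a a a = 0)
    (h2 : ∀ a b, a ≠ b → F a a b + F a b a = 0)
    (h3 : ∀ a b c, a ≠ b → a ≠ c → b ≠ c → F b c a + F a c b + F a b c = 0)
    (i k l : Fin 4) : F i k l = ∑ q, coef F q * gc q i k l := by
  have a0 := h1 0
  have a1 := h1 1
  have a2 := h1 2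
  have a3 := h1 3
  have b01 := h2 0 1 (by decide)
  have b02 := h2 0 2 (by decide)
  have b03 := h2 0 3 (by decide)
  have b12 := h2 1 2 (by decide)
  have b13 := h2 1 3 (by decide)
  have b23 := h2 2 3 (by decide)
  have b10 := h2 1 0 (by decide)
  have b20 := h2 2 0 (by decide)
  have b30 := h2 3 0 (by decide)
  have b21 := h2 2 1 (by decide)
  have b31 := h2 3 1 (by decide)
  have b32 := h2 3 2 (by decide)
  have c0 := h3 1 2 3 (by decide) (by decide) (by decide)
  have c1 := h3 0 2 3 (by decide) (by decide) (by decide)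
  have c2 := h3 0 1 3 (by decide) (by decide) (by decide)
  have c3 := h3 0 1 2 (by decide) (by decide) (by decide)
  have d00 := h0 0 0
  have d01 := h0 0 1
  have d02 := h0 0 2
  have d03 := h0 0 3
  have d11 := h0 1 1
  have d12 := h0 1 2
  have d13 := h0 1 3
  have d22 := h0 2 2
  have d23 := h0 2 3
  have d33 := h0 3 3
  have s10 := hs 1 0
  have s20 := hs 2 0
  have s30 := hs 3 0
  have s21 := hs 2 1
  have s31 := hs 3 1
  have s32 := hs 3 2
  clear h0 h1 h2 h3 hs
  simp only [s10, s20, s30, s21, s31, s32] at b01 b02 b03 b12 b13 b23 b10 b20 b30 b21 b31 b32 c0 c1 c2 c3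
  rw [sum_expand]
  fin_cases i <;> fin_cases k <;> fin_cases l <;>
    simp [gc, Gc, mc, pairs, coef, s10, s20, s30, s21, s31, s32] <;> linarith

lemma rel_of_zero (c : Fin 3 × Fin 4 → ℤ) (h : ∀ i k l, ∑ q, c q * gc q i k l = 0) :
    c = c (0, 3) • rel := by
  simp only [sum_expand] at h
  have e1 := h 1 1 2
  have e2 := h 2 2 1
  have e3 := h 1 1 3
  have e4 := h 2 3 1
  have e5 := h 3 3 1
  have e6 := h 1 3 2
  have e7 := h 2 2 3
  have e8 := h 3 3 2
  have e9 := h 0 1 2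
  have e10 := h 0 1 3
  have e11 := h 0 2 3
  have e12 := h 1 2 2
  have e13 := h 1 2 3
  have e14 := h 1 3 3
  have e15 := h 2 3 3
  clear h
  simp [gc, Gc, mc, pairs] at e1 e2 e3 e4 e5 e6 e7 e8 e9 e10 e11 e12 e13 e14 e15
  funext ⟨a, b⟩
  fin_cases a <;> fin_cases b <;> simp [rel] <;> omega

lemma rel_gc (i k l : Fin 4) : ∑ q, rel q * gc q i k l = 0 := by
  revert i k l
  decide

lemma part2 : ∑ q, rel q • gen q = 0 := by
  refine A_ext (sum_W _) (zero_mem _) fun i k l => ?_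
  rw [A_sum, rel_gc]
  rfl

lemma part3 (x : SC ends) (hx : x ∈ cyc ends 1 3) : ∃ c : Fin 3 × Fin 4 → ℤ,
    x - ∑ q : Fin 3 × Fin 4, c q • gen q ∈ bdry ends 1 3 := by
  obtain ⟨⟨h1, _⟩, h2⟩ := R_cyc hx
  have hD : D ends (R x) = 0 := h1
  have hW := R_W hx.2
  refine ⟨coef (A (R x)), ?_⟩
  convert h2 using 2
  symm
  refine A_ext hW (sum_W _) fun i k l => ?_
  rw [A_sum]
  exact coef_spec _ (A_symm _) (A_rel0 hW hD) (A_rel1 hW hD) (fun a b => A_rel2 hW hD)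
    (fun a b c => A_rel3 hW hD) i k l

lemma part4 (c : Fin 3 × Fin 4 → ℤ)
    (hc : (∑ q : Fin 3 × Fin 4, c q • gen q) ∈ bdry ends 1 3) : c = c (0, 3) • rel := by
  have h := R_bdry hc
  rw [R_fix (sum_W c)] at h
  apply rel_of_zero
  intro i k l
  rw [← A_sum, h]
  rfl

/-- The map from coefficient vectors vanishing at `(0, 3)` to homology. -/
noncomputable def toH : (Fin 3 × Fin 4 → ℤ) →ₗ[ℤ]
    (cyc ends 1 3 ⧸ Submodule.comap (cyc ends 1 3).subtype (bdry ends 1 3)) :=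
  Submodule.mkQ _ ∘ₗ Fintype.linearCombination ℤ (fun q => (⟨gen q, gen_cyc q⟩ : cyc ends 1 3))

lemma toH_zero (c : Fin 3 × Fin 4 → ℤ) :
    toH c = 0 ↔ (∑ q : Fin 3 × Fin 4, c q • gen q) ∈ bdry ends 1 3 := by
  rw [toH, LinearMap.comp_apply, Submodule.mkQ_apply, Submodule.Quotient.mk_eq_zero,
    Submodule.mem_comap, Fintype.linearCombination_apply]
  simp

/-- Extension of coefficient vectors by zero. -/
noncomputable def ext0 : ({q : Fin 3 × Fin 4 // q ≠ (0, 3)} → ℤ) →ₗ[ℤ] (Fin 3 × Fin 4 → ℤ) where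
  toFun c q := if h : q ≠ (0, 3) then c ⟨q, h⟩ else 0
  map_add' := by
    intro c d; funext q; by_cases h : q = (0, 3) <;> simp [h]
  map_smul' := by
    intro c d; funext q; by_cases h : q = (0, 3) <;> simp [h]

lemma ext0_bij : Function.Bijective (toH ∘ₗ ext0) := by
  constructor
  · rw [← LinearMap.ker_eq_bot, LinearMap.ker_eq_bot']
    intro c hc
    rw [LinearMap.comp_apply, toH_zero] at hc
    have h := part4 _ hc
    have h0 : ext0 c (0, 3) = 0 := by simp [ext0]
    rw [h0, zero_smul] at h
    funext ⟨q, hq⟩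
    have := congrFun h q
    simpa [ext0, hq] using this
  · intro y
    obtain ⟨⟨x, hx⟩, rfl⟩ := Submodule.mkQ_surjective _ y
    obtain ⟨c, hc⟩ := part3 x hx
    refine ⟨fun q => (c - c (0, 3) • rel) q.1, ?_⟩
    have e : ext0 (fun q => (c - c (0, 3) • rel) q.1) = c - c (0, 3) • rel := by
      funext q
      by_cases h : q = (0, 3)
      · subst h; simp [ext0, rel]
      · simp [ext0, h]
    have e2 : toH rel = 0 := by
      rw [toH_zero, part2]; exact zero_mem _
    rw [LinearMap.comp_apply, e, map_sub, map_smul, e2, smul_zero, sub_zero, eq_comm,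
      ← sub_eq_zero, toH, LinearMap.comp_apply, ← map_sub, Submodule.mkQ_apply,
      Submodule.Quotient.mk_eq_zero, Submodule.mem_comap, Fintype.linearCombination_apply]
    simpa using hc

lemma part5 : Nonempty (Hgr ends 1 3 ≃+ (Fin 11 → ℤ)) := by
  have e : {q : Fin 3 × Fin 4 // q ≠ (0, 3)} ≃ Fin 11 :=
    Fintype.equivFinOfCardEq (by decide)
  exact ⟨((LinearEquiv.ofBijective _ ext0_bij).symm.toAddEquiv).trans
    (LinearEquiv.funCongrLeft ℤ ℤ e.symm).toAddEquiv⟩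

/-- In `H₁(B₃(S₄))` — the homology of the Świątkowski
complex of the star graph with four edges in degree 1 and weight 3 — the
stabilized star classes satisfy the relation
`(e₄ − e₁)·α₁₂₃ − (e₃ − e₁)·α₁₂₄ + (e₂ − e₁)·α₁₃₄ = 0`, and `H₁(B₃(S₄))` is
free abelian of rank 11, generated by the classes `(e_i − e₁)·α_{1jk}` and
`e₁·α_{1jk}`, subject only to that relation: the generators are cycles,
the relation is a boundary, every degree-1 weight-3 cycle is a combination of
the generators modulo boundaries, the only combinations of the generators that
are boundaries are the multiples of the relation, and the homology is
isomorphic to `ℤ¹¹`. -/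
theorem H1_B3_star4_presentation :
    (∀ q : Fin 3 × Fin 4, gen q ∈ cyc ends 1 3) ∧
    (∑ q : Fin 3 × Fin 4, rel q • gen q) ∈ bdry ends 1 3 ∧
    (∀ x ∈ cyc ends 1 3, ∃ c : Fin 3 × Fin 4 → ℤ,
      x - ∑ q : Fin 3 × Fin 4, c q • gen q ∈ bdry ends 1 3) ∧
    (∀ c : Fin 3 × Fin 4 → ℤ,
      (∑ q : Fin 3 × Fin 4, c q • gen q) ∈ bdry ends 1 3 → ∃ n : ℤ, c = n • rel) ∧
    Nonempty (Hgr ends 1 3 ≃+ (Fin 11 → ℤ)) := by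
  exact ⟨gen_cyc, part2 ▸ zero_mem _, part3, fun c hc => ⟨c (0, 3), part4 c hc⟩, part5⟩

end Star4
end

section
/- The graph Δ obtained by gluing a star graph S₃ to K₃,₃ along three pairwise non-adjacent vertices contains a topologically embedded K₃,₃ and is non-planar; moreover Δ contains no two vertex-disjoint cycles, since every cycle in Δ passes through at least 4 of the 7 vertices of Δ. -/
namespace GraphRealization

/-- The gluing relation for the geometric realization of a graph: each
endpoint of each edge-interval is identified with the corresponding vertex. -/
inductive glueRel {V E : Type} (ends : E → V × V) :
    (E × unitInterval) ⊕ V → (E × unitInterval) ⊕ V → Prop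
  | zero (e : E) : glueRel ends (Sum.inl (e, 0)) (Sum.inr (ends e).1)
  | one (e : E) : glueRel ends (Sum.inl (e, 1)) (Sum.inr (ends e).2)

/-- The geometric realization of the graph with vertex set `V`, edge set `E`
and endpoint map `ends`: one copy of the unit interval for each edge, glued to
the vertices along `ends`. -/
def Realization {V E : Type} (ends : E → V × V) : Type :=
  Quot (glueRel ends)

instance {V E : Type} (ends : E → V × V) : TopologicalSpace (Realization ends) :=
  letI : TopologicalSpace V := ⊥
  letI : TopologicalSpace E := ⊥
  TopologicalSpace.coinduced (Quot.mk (glueRel ends)) inferInstance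

end GraphRealization

namespace GraphRealization

/-- The complete bipartite graph `K₃,₃`, with parts `{0, 1, 2}` (the `aᵢ`) and
`{3, 4, 5}` (the `bⱼ`). -/
def k33Ends : Fin 9 → Fin 6 × Fin 6 :=
  ![(0, 3), (0, 4), (0, 5), (1, 3), (1, 4), (1, 5), (2, 3), (2, 4), (2, 5)]

/-- The graph `Δ`: the union of `K₃,₃` (parts `{0, 1, 2} = {a₁, a₂, a₃}` and
`{3, 4, 5} = {b₁, b₂, b₃}`) with a star `S₃` centered at `6 = c` whose three
leaves are identified with the pairwise non-adjacent vertices `a₁, a₂, a₃`. -/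
def deltaEnds : Fin 12 → Fin 7 × Fin 7 :=
  ![(0, 3), (0, 4), (0, 5), (1, 3), (1, 4), (1, 5), (2, 3), (2, 4), (2, 5),
    (6, 0), (6, 1), (6, 2)]

/-- A combinatorial cycle in a graph: a cyclic sequence of distinct vertices
joined by distinct edges. -/
def IsCycle {V E : Type} (ends : E → V × V) {n : ℕ}
    (vs : Fin (n + 1) → V) (es : Fin (n + 1) → E) : Prop :=
  Function.Injective vs ∧ Function.Injective es ∧
    ∀ i, ends (es i) = (vs i, vs (i + 1)) ∨ ends (es i) = (vs (i + 1), vs i)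

/-! ### Continuous logarithms -/

/-- A nowhere vanishing continuous function on a contractible, locally path connected space
has a continuous logarithm. -/
theorem exists_log_lift {A : Type} [TopologicalSpace A] [SimplyConnectedSpace A]
    [LocallyPathConnectedSpace A] (a : A) (g : A → ℂ) (hg : Continuous g) (h0 : ∀ t, g t ≠ 0) :
    ∃ h : A → ℂ, Continuous h ∧ ∀ t, Complex.exp (h t) = g t := by
  obtain ⟨F, ⟨-, hF⟩, -⟩ := Complex.isCoveringMapOn_exp.existsUnique_continuousMap_lifts
    ⟨g, hg⟩ (a₀ := a) (Complex.exp_log (h0 a)) (fun x => h0 x)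
  exact ⟨F, F.continuous, fun t => congrFun hF t⟩

/-- A continuous function on the line with constant exponential is constant. -/
theorem const_of_exp_const (k : ℝ → ℂ) (hk : Continuous k) (c : ℂ)
    (h : ∀ t, Complex.exp (k t) = c) (s t : ℝ) : k s = k t := by
  have hc : c ≠ 0 := by rw [← h 0]; exact Complex.exp_ne_zero _
  have := (Complex.isCoveringMapOn_exp.existsUnique_continuousMap_lifts
    (ContinuousMap.const ℝ c) (a₀ := t) (h t) (fun x => hc)).unique
    (y₁ := ⟨k, hk⟩) (y₂ := ContinuousMap.const ℝ (k t))
    ⟨rfl, funext h⟩ ⟨rfl, funext fun _ => h t⟩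
  exact congrArg (fun f : C(ℝ, ℂ) => f s) this

/-- The total change of the logarithm along a nowhere vanishing path. -/
theorem exists_delta (g : ℝ → ℂ) : ∃ d : ℂ, Continuous g → (∀ t, g t ≠ 0) →
    Complex.exp d = g 1 / g 0 ∧ ∀ h : ℝ → ℂ, Continuous h → ∀ c : ℂ,
      (∀ t, Complex.exp (h t) = c * g t) → h 1 - h 0 = d := by
  by_cases H : Continuous g ∧ ∀ t, g t ≠ 0
  · obtain ⟨hg, h0⟩ := H
    obtain ⟨l, hl, hle⟩ := exists_log_lift (0 : ℝ) g hg h0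
    refine ⟨l 1 - l 0, fun _ _ => ⟨by rw [Complex.exp_sub, hle, hle], fun h hh c hc => ?_⟩⟩
    have := const_of_exp_const (fun t => h t - l t) (hh.sub hl) c
      (fun t => by rw [Complex.exp_sub, hc, hle, mul_div_assoc, div_self (h0 t), mul_one]) 1 0
    linear_combination this
  · exact ⟨0, fun h1 h2 => absurd ⟨h1, h2⟩ H⟩

/-- The total change of the logarithm along a nowhere vanishing path. -/
noncomputable def delta (g : ℝ → ℂ) : ℂ := (exists_delta g).choose

theorem exp_delta (g : ℝ → ℂ) (hg : Continuous g) (h0 : ∀ t, g t ≠ 0) :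
    Complex.exp (delta g) = g 1 / g 0 := ((exists_delta g).choose_spec hg h0).1

theorem delta_eq (g : ℝ → ℂ) (hg : Continuous g) (h0 : ∀ t, g t ≠ 0) (h : ℝ → ℂ)
    (hh : Continuous h) (c : ℂ) (hc : ∀ t, Complex.exp (h t) = c * g t) :
    h 1 - h 0 = delta g := ((exists_delta g).choose_spec hg h0).2 h hh c hc

/-- If `exp l₀ = g 0` and `exp l₁ = g 1` then `delta g` is `l₁ - l₀` up to a multiple of `2πi`. -/
theorem delta_int (g : ℝ → ℂ) (hg : Continuous g) (h0 : ∀ t, g t ≠ 0) (l₀ l₁ : ℂ)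
    (e₀ : Complex.exp l₀ = g 0) (e₁ : Complex.exp l₁ = g 1) :
    ∃ n : ℤ, delta g = l₁ - l₀ + n * (2 * Real.pi * Complex.I) := by
  rw [← Complex.exp_eq_exp_iff_exists_int, exp_delta g hg h0, Complex.exp_sub, e₀, e₁]

/-- Two paths that do not meet: the winding around the boundary of the square vanishes. -/
theorem delta_square (p q : ℝ → ℂ) (hp : Continuous p) (hq : Continuous q)
    (hpq : ∀ s t, p s ≠ q t) :
    delta (fun t => p 0 - q t) + delta (fun s => q 1 - p s) =
      delta (fun s => q 0 - p s) + delta (fun t => p 1 - q t) := by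
  obtain ⟨G, hG, hGe⟩ := exists_log_lift ((0, 0) : ℝ × ℝ) (fun x => p x.1 - q x.2)
    (by fun_prop) (fun x => sub_ne_zero.2 (hpq _ _))
  have a : ∀ s, G (s, 1) - G (s, 0) = delta (fun t => p s - q t) := fun s =>
    delta_eq (fun t => p s - q t) (by fun_prop) (fun t => sub_ne_zero.2 (hpq _ _))
      (fun t => G (s, t)) (by fun_prop) 1 (fun t => by simp [hGe])
  have b : ∀ t, G (1, t) - G (0, t) = delta (fun s => q t - p s) := fun t =>
    delta_eq (fun s => q t - p s) (by fun_prop) (fun s => sub_ne_zero.2 (hpq _ _).symm)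
      (fun s => G (s, t)) (by fun_prop) (-1) (fun s => by simp [hGe])
  rw [← a, ← a, ← b, ← b]
  ring

/-- `K₃,₃` cannot be drawn in the plane with pairwise disjoint images of disjoint edges
(a version of the van Kampen obstruction). -/
theorem k33_nonplanar (γ : Fin 3 → Fin 3 → ℝ → ℂ) (A B : Fin 3 → ℂ)
    (hc : ∀ i j, Continuous (γ i j)) (h0 : ∀ i j, γ i j 0 = A i) (h1 : ∀ i j, γ i j 1 = B j)
    (hd : ∀ i j i' j', i ≠ i' → j ≠ j' → ∀ s t, γ i j s ≠ γ i' j' t) : False := by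
  have other : ∀ j : Fin 3, ∃ j', j' ≠ j := by decide
  have hA : ∀ i' i j, i' ≠ i → ∀ t, A i' - γ i j t ≠ 0 := by
    intro i' i j h t
    obtain ⟨j', hj'⟩ := other j
    rw [← h0 i' j']
    exact sub_ne_zero.2 (hd _ _ _ _ h hj' _ _)
  have hB : ∀ j' i j, j' ≠ j → ∀ t, B j' - γ i j t ≠ 0 := by
    intro j' i j h t
    obtain ⟨i', hi'⟩ := other i
    rw [← h1 i' j']
    exact sub_ne_zero.2 (hd _ _ _ _ hi' h _ _)
  -- logarithms of differences of vertices
  have key : ∀ X : Fin 3 → ℂ, (∀ i j, i ≠ j → X i - X j ≠ 0) → ∃ L : Fin 3 → Fin 3 → ℂ,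
      (∀ i j, i ≠ j → Complex.exp (L i j) = X i - X j) ∧
      ∀ i j, i < j → L j i = L i j + Real.pi * Complex.I := by
    intro X hX
    refine ⟨fun i j => if i < j then Complex.log (X i - X j)
      else Complex.log (X j - X i) + Real.pi * Complex.I, ?_, ?_⟩
    · intro i j hij
      dsimp only
      split_ifs
      · exact Complex.exp_log (hX _ _ hij)
      · rw [Complex.exp_add, Complex.exp_log (hX _ _ hij.symm), Complex.exp_pi_mul_I]
        ring
    · intro i j hij
      dsimp only
      rw [if_pos hij, if_neg hij.not_gt]
  obtain ⟨LA, LAe, LAs⟩ := key A (fun i j h => by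
    have := hA i j 0 h 0
    rwa [h0] at this)
  obtain ⟨LB, LBe, LBs⟩ := key B (fun i j h => by
    have := hB i 0 j h 1
    rwa [h1] at this)
  have hAB : ∀ i j, A i - B j ≠ 0 := by
    intro i j
    obtain ⟨i', hi'⟩ := other i
    have := hA i i' j hi'.symm 1
    rwa [h1] at this
  obtain ⟨M, hM⟩ : ∃ M : Fin 3 → Fin 3 → ℂ, ∀ i j, Complex.exp (M i j) = A i - B j :=
    ⟨fun i j => Complex.log (A i - B j), fun i j => Complex.exp_log (hAB i j)⟩
  have nA : ∀ i' i j, ∃ n : ℤ, i' ≠ i → delta (fun t => A i' - γ i j t) =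
      M i' j - LA i' i + n * (2 * Real.pi * Complex.I) := by
    intro i' i j
    by_cases h : i' = i
    · exact ⟨0, fun h' => absurd h h'⟩
    · have hcc := hc i j
      obtain ⟨n, hn⟩ := delta_int (fun t => A i' - γ i j t) (by fun_prop) (hA _ _ _ h)
        (LA i' i) (M i' j) (by rw [LAe _ _ h, h0]) (by rw [hM, h1])
      exact ⟨n, fun _ => hn⟩
  have nB : ∀ j' i j, ∃ n : ℤ, j' ≠ j → delta (fun t => B j' - γ i j t) =
      LB j' j - (M i j' + Real.pi * Complex.I) + n * (2 * Real.pi * Complex.I) := by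
    intro j' i j
    by_cases h : j' = j
    · exact ⟨0, fun h' => absurd h h'⟩
    · have hcc := hc i j
      obtain ⟨n, hn⟩ := delta_int (fun t => B j' - γ i j t) (by fun_prop) (hB _ _ _ h)
        (M i j' + Real.pi * Complex.I) (LB j' j)
        (by rw [Complex.exp_add, hM, h0, Complex.exp_pi_mul_I]; ring) (by rw [LBe _ _ h, h1])
      exact ⟨n, fun _ => hn⟩
  choose a ha using nA
  choose b hb using nB
  have hpi : (2 * Real.pi * Complex.I : ℂ) ≠ 0 := Complex.two_pi_I_ne_zero
  have eqn : ∀ i i' j j', i < i' → j ≠ j' →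
      a i i' j' + b j' i j = a i' i j + b j i' j' - (if j < j' then 1 else 0) := by
    intro i i' j j' hi hj
    have := delta_square (γ i j) (γ i' j') (hc _ _) (hc _ _) (hd _ _ _ _ hi.ne hj)
    rw [h0, h0, h1, h1, ha _ _ _ hi.ne, ha _ _ _ hi.ne', hb _ _ _ hj, hb _ _ _ hj.symm,
      LAs _ _ hi] at this
    have e2 : ((a i i' j' + b j' i j : ℤ) : ℂ) =
        ((a i' i j + b j i' j' - (if j < j' then 1 else 0) : ℤ) : ℂ) := by
      apply mul_right_cancel₀ hpi
      push_cast
      rcases lt_or_gt_of_ne hj with h | h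
      · rw [LBs _ _ h] at this
        rw [if_pos h]
        linear_combination this
      · rw [LBs _ _ h] at this
        rw [if_neg h.not_gt]
        linear_combination this
    exact_mod_cast e2
  have e01 := eqn 0 1
  have e02 := eqn 0 2
  have e12 := eqn 1 2
  have x1 := e01 0 1 (by decide) (by decide)
  have x2 := e01 0 2 (by decide) (by decide)
  have x3 := e01 1 2 (by decide) (by decide)
  have x4 := e01 1 0 (by decide) (by decide)
  have x5 := e01 2 0 (by decide) (by decide)
  have x6 := e01 2 1 (by decide) (by decide)
  have y1 := e02 0 1 (by decide) (by decide)
  have y2 := e02 0 2 (by decide) (by decide)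
  have y3 := e02 1 2 (by decide) (by decide)
  have y4 := e02 1 0 (by decide) (by decide)
  have y5 := e02 2 0 (by decide) (by decide)
  have y6 := e02 2 1 (by decide) (by decide)
  have z1 := e12 0 1 (by decide) (by decide)
  have z2 := e12 0 2 (by decide) (by decide)
  have z3 := e12 1 2 (by decide) (by decide)
  have z4 := e12 1 0 (by decide) (by decide)
  have z5 := e12 2 0 (by decide) (by decide)
  have z6 := e12 2 1 (by decide) (by decide)
  rw [if_pos (by decide)] at x1 x2 x3 y1 y2 y3 z1 z2 z3
  rw [if_neg (by decide)] at x4 x5 x6 y4 y5 y6 z4 z5 z6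
  clear * - x1 x2 x3 x4 x5 x6 y1 y2 y3 y4 y5 y6 z1 z2 z3 z4 z5 z6
  omega

/-! ### The geometric realization -/

open Classical in
/-- Normal form of a point of the realization. -/
noncomputable def nf {V E : Type} (ends : E → V × V) :
    (E × unitInterval) ⊕ V → (E × unitInterval) ⊕ V
  | Sum.inl (e, t) => if t = 0 then Sum.inr (ends e).1 else
      if t = 1 then Sum.inr (ends e).2 else Sum.inl (e, t)
  | Sum.inr v => Sum.inr v

theorem mk_nf {V E : Type} (ends : E → V × V) (x : (E × unitInterval) ⊕ V) :
    Quot.mk (glueRel ends) (nf ends x) = Quot.mk (glueRel ends) x := by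
  rcases x with ⟨e, t⟩ | v
  · simp only [nf]
    split_ifs with h h'
    · rw [h]; exact (Quot.sound (glueRel.zero e)).symm
    · rw [h']; exact (Quot.sound (glueRel.one e)).symm
    · rfl
  · rfl

theorem nf_rel {V E : Type} (ends : E → V × V) (x y : (E × unitInterval) ⊕ V)
    (h : glueRel ends x y) : nf ends x = nf ends y := by
  cases h <;> simp [nf]

theorem mk_eq_iff {V E : Type} (ends : E → V × V) (x y : (E × unitInterval) ⊕ V) :
    Quot.mk (glueRel ends) x = Quot.mk (glueRel ends) y ↔ nf ends x = nf ends y := by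
  constructor
  · intro h
    exact congrArg (Quot.lift (nf ends) (nf_rel ends)) h
  · intro h
    rw [← mk_nf, h, mk_nf]

/-- The characteristic map of an edge. -/
def edgeMap {V E : Type} (ends : E → V × V) (e : E) (t : unitInterval) : Realization ends :=
  Quot.mk (glueRel ends) (Sum.inl (e, t))

theorem continuous_edgeMap {V E : Type} (ends : E → V × V) (e : E) :
    Continuous (edgeMap ends e) := by
  let _ : TopologicalSpace V := ⊥
  let _ : TopologicalSpace E := ⊥
  have h : Continuous (Quot.mk (glueRel ends) : _ → Realization ends) :=
    continuous_coinduced_rng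
  exact h.comp (continuous_inl.comp (by fun_prop))

theorem continuous_from {V E X : Type} [TopologicalSpace X] (ends : E → V × V)
    (f : Realization ends → X) (h : ∀ e, Continuous fun t => f (edgeMap ends e t)) :
    Continuous f := by
  let _ : TopologicalSpace V := ⊥
  let _ : TopologicalSpace E := ⊥
  have _ : DiscreteTopology V := ⟨rfl⟩
  have _ : DiscreteTopology E := ⟨rfl⟩
  refine continuous_coinduced_dom.2 (continuous_sum_dom.2 ⟨?_, continuous_of_discreteTopology⟩)
  exact continuous_prod_of_discrete_left.2 h

theorem edgeMap_ne {V E : Type} (ends : E → V × V) (e e' : E) (hee : e ≠ e')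
    (h1 : (ends e).1 ≠ (ends e').1) (h2 : (ends e).1 ≠ (ends e').2)
    (h3 : (ends e).2 ≠ (ends e').1) (h4 : (ends e).2 ≠ (ends e').2) (s t : unitInterval) :
    edgeMap ends e s ≠ edgeMap ends e' t := by
  intro h
  have h := (mk_eq_iff ends _ _).1 h
  simp only [nf] at h
  split_ifs at h <;> simp_all

theorem edgeMap_zero {V E : Type} (ends : E → V × V) (e : E) :
    edgeMap ends e 0 = Quot.mk (glueRel ends) (Sum.inr (ends e).1) :=
  Quot.sound (glueRel.zero e)

theorem edgeMap_one {V E : Type} (ends : E → V × V) (e : E) :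
    edgeMap ends e 1 = Quot.mk (glueRel ends) (Sum.inr (ends e).2) :=
  Quot.sound (glueRel.one e)

/-- The inclusion `K₃,₃ → Δ` before gluing. -/
def preIncl : (Fin 9 × unitInterval) ⊕ Fin 6 → (Fin 12 × unitInterval) ⊕ Fin 7
  | Sum.inl (e, t) => Sum.inl (Fin.castLE (by decide) e, t)
  | Sum.inr v => Sum.inr (Fin.castLE (by decide) v)

theorem ends_cast : ∀ e : Fin 9, deltaEnds (Fin.castLE (by decide) e) =
    (Fin.castLE (by decide) (k33Ends e).1, Fin.castLE (by decide) (k33Ends e).2) := by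
  decide

theorem preIncl_injective : Function.Injective preIncl := by
  rintro (⟨e, t⟩ | v) (⟨e', t'⟩ | v') h <;> simp_all [preIncl]

theorem nf_preIncl (x : (Fin 9 × unitInterval) ⊕ Fin 6) :
    nf deltaEnds (preIncl x) = preIncl (nf k33Ends x) := by
  rcases x with ⟨e, t⟩ | v
  · simp only [preIncl, nf, ends_cast]
    split_ifs <;> rfl
  · rfl

theorem exists_embedding : ∃ f : Realization k33Ends → Realization deltaEnds,
    Continuous f ∧ Function.Injective f := by
  refine ⟨Quot.lift (fun x => Quot.mk (glueRel deltaEnds) (preIncl x)) ?_, ?_, ?_⟩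
  · intro x y h
    refine (mk_eq_iff deltaEnds _ _).2 ?_
    rw [nf_preIncl, nf_preIncl, nf_rel _ _ _ h]
  · exact continuous_from _ _ fun e => continuous_edgeMap deltaEnds (Fin.castLE (by decide) e)
  · rintro ⟨x⟩ ⟨y⟩ h
    have h := (mk_eq_iff deltaEnds _ _).1 h
    rw [nf_preIncl, nf_preIncl] at h
    exact (mk_eq_iff k33Ends _ _).2 (preIncl_injective h)

/-- The edge of `Δ` joining `aᵢ` to `bⱼ`. -/
def edge : Fin 3 → Fin 3 → Fin 12 := ![![0, 1, 2], ![3, 4, 5], ![6, 7, 8]]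

theorem ends_edge : ∀ i j : Fin 3,
    deltaEnds (edge i j) = (Fin.castLE (by decide) i, Fin.natAdd 3 (Fin.castLE (by decide : 3 ≤ 4) j)) := by
  decide

theorem edge_ne : ∀ i j i' j' : Fin 3, i ≠ i' → j ≠ j' →
    edge i j ≠ edge i' j' ∧ (deltaEnds (edge i j)).1 ≠ (deltaEnds (edge i' j')).1 ∧
    (deltaEnds (edge i j)).1 ≠ (deltaEnds (edge i' j')).2 ∧
    (deltaEnds (edge i j)).2 ≠ (deltaEnds (edge i' j')).1 ∧
    (deltaEnds (edge i j)).2 ≠ (deltaEnds (edge i' j')).2 := by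
  decide

theorem nonplanar : ¬ ∃ f : Realization deltaEnds → ℝ × ℝ,
    Continuous f ∧ Function.Injective f := by
  rintro ⟨f, hf, hinj⟩
  let φ : Realization deltaEnds → ℂ := fun x => Complex.equivRealProdCLM.symm (f x)
  have hφ : Continuous φ := Complex.equivRealProdCLM.symm.continuous.comp hf
  have hφi : Function.Injective φ := Complex.equivRealProdCLM.symm.injective.comp hinj
  refine k33_nonplanar
    (fun i j t => φ (edgeMap deltaEnds (edge i j) (Set.projIcc 0 1 zero_le_one t)))
    (fun i => φ (Quot.mk _ (Sum.inr (Fin.castLE (by decide) i))))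
    (fun j => φ (Quot.mk _ (Sum.inr (Fin.natAdd 3 (Fin.castLE (by decide : 3 ≤ 4) j)))))
    ?_ ?_ ?_ ?_
  · intro i j
    exact hφ.comp ((continuous_edgeMap _ _).comp continuous_projIcc)
  · intro i j
    have : Set.projIcc (0 : ℝ) 1 zero_le_one 0 = 0 := Set.projIcc_left _
    simp only [this, edgeMap_zero, ends_edge]
  · intro i j
    have : Set.projIcc (0 : ℝ) 1 zero_le_one 1 = 1 := Set.projIcc_right _
    simp only [this, edgeMap_one, ends_edge]
  · intro i j i' j' hi hj s t h
    obtain ⟨a, b, c, d, e⟩ := edge_ne i j i' j' hi hj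
    exact edgeMap_ne deltaEnds _ _ a b c d e _ _ (hφi h)

/-! ### Cycles -/

/-- Being one of `a₁, a₂, a₃`. -/
def isA (v : Fin 7) : Prop := v = 0 ∨ v = 1 ∨ v = 2

instance (v : Fin 7) : Decidable (isA v) := by unfold isA; infer_instance

theorem edge_A : ∀ e : Fin 12, (isA (deltaEnds e).1 ∧ ¬ isA (deltaEnds e).2) ∨
    (¬ isA (deltaEnds e).1 ∧ isA (deltaEnds e).2) := by decide

theorem edge_unique : ∀ e e' : Fin 12, (deltaEnds e = deltaEnds e' ∨
    deltaEnds e = ((deltaEnds e').2, (deltaEnds e').1)) → e = e' := by decide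

theorem cycle_step {n : ℕ} {vs : Fin (n + 1) → Fin 7} {es : Fin (n + 1) → Fin 12}
    (h : IsCycle deltaEnds vs es) (i : Fin (n + 1)) : isA (vs (i + 1)) ↔ ¬ isA (vs i) := by
  have := edge_A (es i)
  rcases h.2.2 i with h | h <;> rw [h] at this <;> simp only at this <;> generalize isA (vs i) = p at * <;>
    generalize isA (vs (i + 1)) = q at * <;> clear h <;> grind

theorem cycle_ne {n : ℕ} {vs : Fin (n + 1) → Fin 7} {es : Fin (n + 1) → Fin 12}
    (h : IsCycle deltaEnds vs es) (i : Fin (n + 1)) : vs (i + 1 + 1) ≠ vs i := by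
  intro hv
  have h2 := h.2.2 (i + 1)
  rw [hv] at h2
  have he : es (i + 1) = es i := by
    apply edge_unique
    rcases h.2.2 i with h1 | h1 <;> rcases h2 with h2 | h2 <;> rw [h1, h2] <;> simp
  have hi := h.2.1 he
  have := cycle_step h i
  rw [hi] at this
  tauto

theorem cycle_card {n : ℕ} {vs : Fin (n + 1) → Fin 7} {es : Fin (n + 1) → Fin 12}
    (h : IsCycle deltaEnds vs es) : ∃ i j, vs i ≠ vs j ∧ isA (vs i) ∧ isA (vs j) := by
  by_cases h0 : isA (vs 0)
  · refine ⟨0 + 1 + 1, 0, cycle_ne h 0, ?_, h0⟩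
    rw [cycle_step h, cycle_step h]
    tauto
  · refine ⟨0 + 1 + 1 + 1, 0 + 1, cycle_ne h (0 + 1), ?_, ?_⟩
    · rw [cycle_step h, cycle_step h, cycle_step h]
      tauto
    · rw [cycle_step h]
      exact h0

theorem pigeon : ∀ a b c d : Fin 7, isA a → isA b → isA c → isA d → a ≠ b → c ≠ d →
    a = c ∨ a = d ∨ b = c ∨ b = d := by
  unfold isA
  intro a b c d
  omega

/-- The graph `Δ` obtained by gluing a star `S₃` to `K₃,₃`
along three pairwise non-adjacent vertices contains a topologically embedded
`K₃,₃` and is non-planar; moreover every cycle of `Δ` contains at least two of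
the vertices `a₁, a₂, a₃`, so `Δ` contains no two vertex-disjoint cycles. -/
theorem delta_graph_properties :
    (∃ f : Realization k33Ends → Realization deltaEnds,
        Continuous f ∧ Function.Injective f) ∧
    (¬ ∃ f : Realization deltaEnds → ℝ × ℝ,
        Continuous f ∧ Function.Injective f) ∧
    (∀ (n : ℕ) (vs : Fin (n + 1) → Fin 7) (es : Fin (n + 1) → Fin 12),
      IsCycle deltaEnds vs es →
      2 ≤ (Finset.univ.filter fun i => vs i = 0 ∨ vs i = 1 ∨ vs i = 2).card) ∧
    (∀ (n m : ℕ) (vs : Fin (n + 1) → Fin 7) (es : Fin (n + 1) → Fin 12)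
        (vs' : Fin (m + 1) → Fin 7) (es' : Fin (m + 1) → Fin 12),
      IsCycle deltaEnds vs es → IsCycle deltaEnds vs' es' →
      ∃ i j, vs i = vs' j) := by
  refine ⟨exists_embedding, nonplanar, ?_, ?_⟩
  · intro n vs es h
    obtain ⟨i, j, hij, hi, hj⟩ := cycle_card h
    exact Finset.one_lt_card.2 ⟨i, by simpa [isA] using hi, j, by simpa [isA] using hj,
      fun e => hij (congrArg vs e)⟩
  · intro n m vs es vs' es' h h'
    obtain ⟨i, j, hij, hi, hj⟩ := cycle_card h
    obtain ⟨k, l, hkl, hk, hl⟩ := cycle_card h'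
    rcases pigeon _ _ _ _ hi hj hk hl hij hkl with e | e | e | e
    exacts [⟨i, k, e⟩, ⟨i, l, e⟩, ⟨j, k, e⟩, ⟨j, l, e⟩]

end GraphRealization
end
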